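/- Let i ∈ Σ_{n+1}. If there exists a sequence (σ_1, …, σ_n) ∈ {A, D}^n such that ind_{σ_k}(C_{σ_{k+1}} ∘ ⋯ ∘ C_{σ_n}(i)) = 0 for all k = n, n−1, …, 1, then for every dominant integral weight λ the string polytope Δ_i(λ) is an integral (lattice) polytope, i.e. all of its vertices lie in ℤ^N. -/

import Mathlib

open scoped Classical

noncomputable section

namespace StringPolytope

/-! ### Words, reduced words, two-moves -/

/-- the simple transposition `s_a = (a, a+1)` acting on `ℕ` (wires are `1, …, n+1`). -/
def sTrans (a : ℕ) : Equiv.Perm ℕ := Equiv.swap a (a + 1)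

/-- product `s_{i₁} ⋯ s_{i_N}` of the simple transpositions of a word. -/
def wordProd (w : List ℕ) : Equiv.Perm ℕ := (w.map sTrans).prod

/-- the longest element `w₀` of the symmetric group on `{1, …, n+1}`,
sending `k ↦ n + 2 - k` there and fixing everything else. -/
def longestPerm (n : ℕ) : Equiv.Perm ℕ :=
  Function.Involutive.toPerm
    (fun k => if 1 ≤ k ∧ k ≤ n + 1 then n + 2 - k else k)
    (by intro k; dsimp only; split_ifs <;> omega)

/-- `w ∈ Σ_{n+1}`: a reduced word of the longest element of `S_{n+1}`,
i.e. a word over `[n] = {1,…,n}` of length `N = n(n+1)/2` whose product is `w₀`. -/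
def IsReduced (n : ℕ) (w : List ℕ) : Prop :=
  w.length = n * (n + 1) / 2 ∧ (∀ a ∈ w, 1 ≤ a ∧ a ≤ n) ∧ wordProd w = longestPerm n

/-- a single 2-move: exchange two adjacent letters `(a, b)` with `|a - b| > 1`. -/
def TwoMoveStep (w w' : List ℕ) : Prop :=
  ∃ u v a b, (a + 1 < b ∨ b + 1 < a) ∧ w = u ++ a :: b :: v ∧ w' = u ++ b :: a :: v

/-- 2-move equivalence of words. -/
def TwoMoveEquiv : List ℕ → List ℕ → Prop := Relation.ReflTransGen TwoMoveStep

/-- `A_n = (1, 2, …, n)`. -/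
def ascWord (n : ℕ) : List ℕ := (List.range n).map (· + 1)

/-- `D_n = (n, n-1, …, 1)`. -/
def descWord (n : ℕ) : List ℕ := (ascWord n).reverse

/-! ### The wiring diagram -/

/-- the letter `i_j` of `w` (1-based index `j`); the node `t_j` lies in column `i_j`. -/
def letterAt (w : List ℕ) (j : ℕ) : ℕ := w.getD (j - 1) 0

/-- `1 ≤ j ≤ N`: `t_j` is an actual node of the diagram. -/
def ValidNode (w : List ℕ) (j : ℕ) : Prop := 1 ≤ j ∧ j ≤ w.length

/-- the column-to-wire assignment just above node `t_j`
(at the top of the diagram, wire `k` is in column `k`). -/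
def stateAbove (w : List ℕ) (j : ℕ) : Equiv.Perm ℕ := wordProd (w.take (j - 1))

/-- the column-to-wire assignment just below node `t_j`. -/
def stateBelow (w : List ℕ) (j : ℕ) : Equiv.Perm ℕ := wordProd (w.take j)

/-- one of the two wires crossing at node `t_j` (the one leaving upward-left). -/
def wireX (w : List ℕ) (j : ℕ) : ℕ := stateAbove w j (letterAt w j)

/-- the other wire crossing at node `t_j` (the one leaving upward-right). -/
def wireY (w : List ℕ) (j : ℕ) : ℕ := stateAbove w j (letterAt w j + 1)

/-- the node `t_j` lies on the wire `ℓ_r`. -/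
def NodeOnWire (w : List ℕ) (j r : ℕ) : Prop := wireX w j = r ∨ wireY w j = r

/-- given one wire `r` at node `t_j`, the other wire crossing there. -/
def otherWire (w : List ℕ) (j r : ℕ) : ℕ := if wireX w j = r then wireY w j else wireX w j

/-- the column of wire `ℓ_r` at the height of node `t_j`. -/
def wireCol (w : List ℕ) (j r : ℕ) : ℕ := (stateBelow w j).symm r

/-- node `t_j` lies strictly below the wire `ℓ_{n+1}`
(which runs from the bottom-left corner to the top-right corner). -/
def BelowWireLast (n : ℕ) (w : List ℕ) (j : ℕ) : Prop :=
  wireCol w j (n + 1) < letterAt w j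

/-- node `t_j` lies strictly above the wire `ℓ_{n+1}`. -/
def AboveWireLast (n : ℕ) (w : List ℕ) (j : ℕ) : Prop :=
  letterAt w j + 1 < wireCol w j (n + 1)

/-- node `t_j` lies strictly below the wire `ℓ_1`
(which runs from the bottom-right corner to the top-left corner). -/
def BelowWireOne (w : List ℕ) (j : ℕ) : Prop :=
  letterAt w j + 1 < wireCol w j 1

/-- node `t_j` lies strictly above the wire `ℓ_1`. -/
def AboveWireOne (w : List ℕ) (j : ℕ) : Prop :=
  wireCol w j 1 < letterAt w j

/-! ### Rigorous (Gleizer–Postnikov) paths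

A path in `G(i, k)` is encoded by `k` together with the list of its switching
nodes, in order of travel.  Wires `ℓ_1, …, ℓ_k` are oriented upward
(decreasing node index) and the remaining wires downward. -/

/-- the (1-based indices of the) nodes lying on wire `ℓ_r`, in order of increasing index. -/
def nodesOn (w : List ℕ) (r : ℕ) : List ℕ :=
  ((List.range w.length).map (· + 1)).filter (fun j => decide (NodeOnWire w j r))

/-- nodes on wire `ℓ_r` strictly between the nodes `t_a` and `t_b`. -/
def segList (w : List ℕ) (r a b : ℕ) : List ℕ :=
  (nodesOn w r).filter (fun j => decide (min a b < j ∧ j < max a b))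

/-- nodes on wire `ℓ_r` strictly below the node `t_a`. -/
def tailList (w : List ℕ) (r a : ℕ) : List ℕ :=
  (nodesOn w r).filter (fun j => decide (a < j))

/-- a forbidden fragment of `G(i, k)`: the path passes straight through node `t_j`
travelling along the wire `ℓ_r`, where the other wire `ℓ_b` crossing there has the same
orientation as `ℓ_r` and (`r < b` if both upward, `r > b` if both downward). -/
def Forbidden (w : List ℕ) (k j r : ℕ) : Prop :=
  (r ≤ k ∧ otherWire w j r ≤ k ∧ r < otherWire w j r) ∨
  (k < r ∧ k < otherWire w j r ∧ otherWire w j r < r)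

/-- travelling in `G(i,k)`: currently on wire `ℓ_r` at node `t_a` (just switched there),
with future switching nodes `ms`; the travel is legal and ends at `L_{k+1}`. -/
def TravelOK (w : List ℕ) (k : ℕ) : ℕ → ℕ → List ℕ → Prop
  | r, a, [] => r = k + 1 ∧ ∀ j ∈ tailList w r a, ¬ Forbidden w k j r
  | r, a, m :: ms =>
      ValidNode w m ∧ NodeOnWire w m r ∧
      (if r ≤ k then m < a else a < m) ∧
      (∀ j ∈ segList w r a m, ¬ Forbidden w k j r) ∧
      TravelOK w k (otherWire w m r) m ms

/-- all nodes visited after the switch at node `t_a` onto wire `ℓ_r`. -/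
def visitTail (w : List ℕ) : ℕ → ℕ → List ℕ → List ℕ
  | r, a, [] => tailList w r a
  | r, a, m :: ms => segList w r a m ++ m :: visitTail w (otherWire w m r) m ms

/-- the list of all nodes visited by the path (switching nodes and straight passes). -/
def visitList (w : List ℕ) (k : ℕ) : List ℕ → List ℕ
  | [] => []
  | m :: ms => tailList w k m ++ m :: visitTail w (otherWire w m k) m ms

/-- `(k, ms)` encodes a rigorous (Gleizer–Postnikov) path in `G(i, k)`:
it starts at `L_k` going up the wire `ℓ_k`, switches wires exactly at the nodes
listed in `ms`, respects the orientation, ends at `L_{k+1}`, contains no forbidden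
fragment and passes through each node at most once. -/
def IsGPPath (n : ℕ) (w : List ℕ) (k : ℕ) (ms : List ℕ) : Prop :=
  1 ≤ k ∧ k ≤ n ∧
  (match ms with
   | [] => False
   | m :: rest =>
       ValidNode w m ∧ NodeOnWire w m k ∧
       (∀ j ∈ tailList w k m, ¬ Forbidden w k j k) ∧
       TravelOK w k (otherWire w m k) m rest) ∧
  (visitList w k ms).Nodup

/-- the set `GP(i)` of all rigorous paths of `G(i)`. -/
def GP (n : ℕ) (w : List ℕ) : Set (ℕ × List ℕ) := {p | IsGPPath n w p.1 p.2}

/-- `|GP(i)|`, the number of rigorous paths. -/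
def numGP (n : ℕ) (w : List ℕ) : ℕ := (GP n w).ncard

/-- the successive switches of a path: `(node, from-wire, to-wire)`. -/
def pathSwitches (w : List ℕ) : ℕ → List ℕ → List (ℕ × ℕ × ℕ)
  | _, [] => []
  | r, m :: ms => (m, r, otherWire w m r) :: pathSwitches w (otherWire w m r) ms

/-- the wire-expression of a path: the successive wires travelled. -/
def wireSeq (w : List ℕ) : ℕ → List ℕ → List ℕ
  | r, [] => [r]
  | r, m :: ms => r :: wireSeq w (otherWire w m r) ms

/-- the peaks of a path: switching nodes where the path switches from an
upward wire to a downward wire. -/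
def peaks (w : List ℕ) (k : ℕ) (ms : List ℕ) : List ℕ :=
  ((pathSwitches w k ms).filter (fun e => decide (e.2.1 ≤ k ∧ k < e.2.2))).map (·.1)

/-! ### String cone, `λ`-cone, string polytope -/

/-- `N = n(n+1)/2`, the number of nodes. -/
abbrev Dim (n : ℕ) : ℕ := n * (n + 1) / 2

/-- the coefficient `a_j` of `t_j` in the string inequality of the path `(k, ms)`:
`+1` if the path switches at `t_j` from `ℓ_r` to `ℓ_s` with `r < s`,
`-1` if it switches with `r > s`, and `0` otherwise. -/
def coeff (w : List ℕ) (k : ℕ) (ms : List ℕ) (j : ℕ) : ℝ :=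
  ((pathSwitches w k ms).map (fun e =>
    if e.1 = j then (if e.2.1 < e.2.2 then (1 : ℝ) else -1) else 0)).sum

/-- the (primitive inward normal) coefficient vector of the string inequality of a path. -/
def normalVec (n : ℕ) (w : List ℕ) (p : ℕ × List ℕ) : Fin (Dim n) → ℝ :=
  fun j => coeff w p.1 p.2 ((j : ℕ) + 1)

/-- the left-hand side `∑ a_j t_j` of the string inequality of the path `p`. -/
def stringIneq (n : ℕ) (w : List ℕ) (p : ℕ × List ℕ) (t : Fin (Dim n) → ℝ) : ℝ :=
  ∑ j : Fin (Dim n), normalVec n w p j * t j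

/-- the string cone `C_i ⊆ ℝ^N`. -/
def stringCone (n : ℕ) (w : List ℕ) : Set (Fin (Dim n) → ℝ) :=
  {t | ∀ p ∈ GP n w, 0 ≤ stringIneq n w p t}

/-- the polyhedron cut out by all string inequalities except the one of `p₀`. -/
def stringConeExcept (n : ℕ) (w : List ℕ) (p₀ : ℕ × List ℕ) : Set (Fin (Dim n) → ℝ) :=
  {t | ∀ p ∈ GP n w, p ≠ p₀ → 0 ≤ stringIneq n w p t}

/-- the coefficient `a_k` in the `λ`-inequality of node `t_j`:
`1` if `t_k` is one column left or right of `t_j`, `-2` if in the same column. -/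
def lamCoeff (w : List ℕ) (j k : ℕ) : ℝ :=
  if letterAt w k = letterAt w j then -2
  else if letterAt w k = letterAt w j + 1 ∨ letterAt w k + 1 = letterAt w j then 1
  else 0

/-- the `λ`-inequality of node `t_{j+1}`:
`t_j ≤ λ_{i_j} + ∑_{k > j} a_k t_k`. -/
def LamIneq (n : ℕ) (w : List ℕ) (lam : ℕ → ℤ) (j : Fin (Dim n)) (t : Fin (Dim n) → ℝ) : Prop :=
  t j ≤ (lam (letterAt w ((j : ℕ) + 1)) : ℝ) +
    ∑ k : Fin (Dim n),
      (if (j : ℕ) < (k : ℕ) then lamCoeff w ((j : ℕ) + 1) ((k : ℕ) + 1) else 0) * t k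

/-- the `λ`-cone `C_i^λ ⊆ ℝ^N`. -/
def lamCone (n : ℕ) (w : List ℕ) (lam : ℕ → ℤ) : Set (Fin (Dim n) → ℝ) :=
  {t | ∀ j, LamIneq n w lam j t}

/-- the polyhedron cut out by all `λ`-inequalities except the one of `j₀`. -/
def lamConeExcept (n : ℕ) (w : List ℕ) (lam : ℕ → ℤ) (j₀ : Fin (Dim n)) :
    Set (Fin (Dim n) → ℝ) :=
  {t | ∀ j, j ≠ j₀ → LamIneq n w lam j t}

/-- the string polytope `Δ_i(λ) = C_i ∩ C_i^λ`. -/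
def stringPolytope (n : ℕ) (w : List ℕ) (lam : ℕ → ℤ) : Set (Fin (Dim n) → ℝ) :=
  stringCone n w ∩ lamCone n w lam

/-- `λ = λ_1 ϖ_1 + ⋯ + λ_n ϖ_n` is a dominant integral weight: all `λ_j ≥ 0`. -/
def Dominant (n : ℕ) (lam : ℕ → ℤ) : Prop := ∀ j, 1 ≤ j → j ≤ n → 0 ≤ lam j

/-- `λ` is a regular dominant integral weight: all `λ_j > 0`. -/
def RegularDominant (n : ℕ) (lam : ℕ → ℤ) : Prop := ∀ j, 1 ≤ j → j ≤ n → 0 < lam j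

/-! ### Unimodular equivalence, Gelfand–Cetlin polytope, facets -/

/-- `P` and `Q` are unimodularly equivalent: `Q = M(P) + v` with `M ∈ GL(m, ℤ)`, `v ∈ ℤ^m`. -/
def UnimodEquiv {m : ℕ} (P Q : Set (Fin m → ℝ)) : Prop :=
  ∃ (M : Matrix (Fin m) (Fin m) ℤ) (v : Fin m → ℤ), IsUnit M.det ∧
    Q = (fun x i => (∑ j, (M i j : ℝ) * x j) + (v i : ℝ)) '' P

/-- the entry `x_{k,j}` (`1 ≤ j ≤ k ≤ n+1`) of a Gelfand–Cetlin pattern, where the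
top row is `x_{n+1,j} = λ_j + ⋯ + λ_n` and `x_{n+1,n+1} = 0`; the pair `(k, j)` is
encoded as the coordinate `k(k-1)/2 + (j-1)` of `ℝ^N`. -/
def gcX (n : ℕ) (lam : ℕ → ℤ) (x : Fin (Dim n) → ℝ) (k j : ℕ) : ℝ :=
  if k = n + 1 then (if j ≤ n then ∑ t ∈ Finset.Icc j n, (lam t : ℝ) else 0)
  else if h : k * (k - 1) / 2 + (j - 1) < Dim n then x ⟨k * (k - 1) / 2 + (j - 1), h⟩ else 0

/-- the Gelfand–Cetlin polytope `GC(λ) ⊆ ℝ^N`. -/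
def GCPolytope (n : ℕ) (lam : ℕ → ℤ) : Set (Fin (Dim n) → ℝ) :=
  {x | ∀ k j, 1 ≤ k → k ≤ n → 1 ≤ j → j ≤ k →
      gcX n lam x k j ≤ gcX n lam x (k + 1) j ∧
      gcX n lam x (k + 1) (j + 1) ≤ gcX n lam x k j}

/-- a face of a convex set: a convex extreme subset. -/
def IsFaceSet {m : ℕ} (S F : Set (Fin m → ℝ)) : Prop := IsExtreme ℝ S F ∧ Convex ℝ F

/-- a facet: a maximal proper face. -/
def IsFacet {m : ℕ} (S F : Set (Fin m → ℝ)) : Prop :=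
  IsFaceSet S F ∧ F ≠ S ∧ ∀ G, IsFaceSet S G → G ≠ S → F ⊆ G → F = G

/-- the number of facets. -/
def numFacets {m : ℕ} (S : Set (Fin m → ℝ)) : ℕ := {F | IsFacet S F}.ncard

/-- combinatorial equivalence: an inclusion-preserving bijection between face lattices. -/
def CombEquiv {m : ℕ} (S T : Set (Fin m → ℝ)) : Prop :=
  ∃ e : {F // IsFaceSet S F} ≃ {F // IsFaceSet T F},
    ∀ F G : {F // IsFaceSet S F}, F.1 ⊆ G.1 ↔ (e F).1 ⊆ (e G).1

/-! ### Indices, contractions and extensions -/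

/-- the `D`-index `ind_D(i) = |i_D^+|` for a decomposition `i ∼ i_D^- D_n i_D^+`
(independent of the decomposition). -/
def indD (n : ℕ) (w : List ℕ) : ℕ :=
  sInf {s | ∃ u v : List ℕ, v.length = s ∧ TwoMoveEquiv w (u ++ descWord n ++ v)}

/-- the `A`-index `ind_A(i) = |i_A^+|` for a decomposition `i ∼ i_A^- A_n i_A^+`. -/
def indA (n : ℕ) (w : List ℕ) : ℕ :=
  sInf {s | ∃ u v : List ℕ, v.length = s ∧ TwoMoveEquiv w (u ++ ascWord n ++ v)}

/-- `w'` is a `D`-contraction `C_D(w) = i_D^- (i_D^+ - 1)` of `w ∈ Σ_{n+1}`. -/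
def IsContractionD (n : ℕ) (w w' : List ℕ) : Prop :=
  ∃ u v : List ℕ, TwoMoveEquiv w (u ++ descWord n ++ v) ∧ w' = u ++ v.map (· - 1)

/-- `w'` is an `A`-contraction `C_A(w) = (i_A^- - 1) i_A^+` of `w ∈ Σ_{n+1}`. -/
def IsContractionA (n : ℕ) (w w' : List ℕ) : Prop :=
  ∃ u v : List ℕ, TwoMoveEquiv w (u ++ ascWord n ++ v) ∧ w' = u.map (· - 1) ++ v

/-- the `D`-extension `E_D(s) : Σ_{n+1} → Σ_{n+2}`,
`i = i^-(s) i^+(s) ↦ i^-(s) D_{n+1} (i^+(s) + 1)` where `|i^+(s)| = s`. -/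
def extD (n : ℕ) (s : ℕ) (w : List ℕ) : List ℕ :=
  w.take (w.length - s) ++ descWord (n + 1) ++ (w.drop (w.length - s)).map (· + 1)

/-- the `A`-extension `E_A(s) : Σ_{n+1} → Σ_{n+2}`,
`i = i^-(s) i^+(s) ↦ (i^-(s) + 1) A_{n+1} i^+(s)`. -/
def extA (n : ℕ) (s : ℕ) (w : List ℕ) : List ℕ :=
  (w.take (w.length - s)).map (· + 1) ++ ascWord (n + 1) ++ w.drop (w.length - s)

/-- there exists `(σ_1, …, σ_n) ∈ {A, D}^n` (here `true = D`, `false = A`) such that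
`ind_{σ_k}(C_{σ_{k+1}} ∘ ⋯ ∘ C_{σ_n}(i)) = 0` for all `k = n, …, 1`. -/
def SimplicialWord (n : ℕ) (w : List ℕ) : Prop :=
  ∃ (σ : ℕ → Bool) (c : ℕ → List ℕ), c n = w ∧
    ∀ k, 1 ≤ k → k ≤ n →
      (if σ k then IsContractionD k (c k) (c (k - 1)) ∧ indD k (c k) = 0
       else IsContractionA k (c k) (c (k - 1)) ∧ indA k (c k) = 0)


/-- the `D`-coindex `coind_D(i) = |i_D^-|`. -/
def coindD (n : ℕ) (w : List ℕ) : ℕ :=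
  sInf {s | ∃ u v : List ℕ, u.length = s ∧ TwoMoveEquiv w (u ++ descWord n ++ v)}

/-- the `A`-coindex `coind_A(i) = |i_A^-|`. -/
def coindA (n : ℕ) (w : List ℕ) : ℕ :=
  sInf {s | ∃ u v : List ℕ, u.length = s ∧ TwoMoveEquiv w (u ++ ascWord n ++ v)}

/-- the `a`-th (0-based) coordinate of a point of `ℝ^N`. -/
def entry (n : ℕ) (t : Fin (Dim n) → ℝ) (a : ℕ) : ℝ :=
  if h : a < Dim n then t ⟨a, h⟩ else 0

/-- the product of cones
`t_1 ≥ 0`, `t_2 ≥ t_3 ≥ 0`, …, `t_{N-n+1} ≥ ⋯ ≥ t_N ≥ 0` (in `ℝ^N`, 1-based: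
for `k = 1, …, n` the chain `t_{k(k-1)/2+1} ≥ ⋯ ≥ t_{k(k-1)/2+k} ≥ 0`). -/
def chainCone (n : ℕ) : Set (Fin (Dim n) → ℝ) :=
  {t | ∀ k j, 1 ≤ k → k ≤ n → 1 ≤ j → j ≤ k →
    (if j = k then 0 else entry n t (k * (k - 1) / 2 + j)) ≤
      entry n t (k * (k - 1) / 2 + (j - 1))}


/-!
A simplicial word is 2-move equivalent to a concatenation of blocks of lengths `1, …, n`, each
running through its letters monotonically: a vanishing index moves a block `D_m` or `A_m` to the
end, and a contraction removes it. Every node of the last block of such a normal word lies on one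
and the same wire, so a rigorous path which meets the block yields only the inequality that the
labels along the block decrease towards `0`; hence the string cone is a product of chain cones.

Subtracting the consecutive differences of the labels of a block from the row of partial sums of
the weight turns the string and `λ`-inequalities at the block into the condition that the row and
the shorter one so obtained interlace, as in a Gelfand–Tsetlin pattern. The function
`x ↦ x ± dist(x, ℤ)` is monotone, so moving all entries of a pattern by their distances to the
integers, in either direction, preserves interlacing. The top row is integral and stays fixed, so
at an extreme point this motion is trivial, that is, all entries are integers.
-/

/-! ### Two-moves and products of simple transpositions -/

theorem wordProd_nil : wordProd [] = 1 := rfl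

theorem wordProd_cons (c : ℕ) (w : List ℕ) : wordProd (c :: w) = sTrans c * wordProd w := by
  simp [wordProd]

theorem wordProd_append (u v : List ℕ) : wordProd (u ++ v) = wordProd u * wordProd v := by
  simp [wordProd]

theorem wordProd_singleton (c : ℕ) : wordProd [c] = sTrans c := by
  simp [wordProd]

theorem wordProd_map_succ (w : List ℕ) (x : ℕ) :
    wordProd (w.map (· + 1)) (x + 1) = wordProd w x + 1 := by
  induction w generalizing x with
  | nil => rfl
  | cons c w ih =>
    rw [List.map_cons, wordProd_cons, wordProd_cons, Equiv.Perm.mul_apply, ih,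
      Equiv.Perm.mul_apply]
    simp only [sTrans, Equiv.swap_apply_def]
    grind

theorem sTrans_comm {a b : ℕ} (h : a + 1 < b ∨ b + 1 < a) :
    sTrans a * sTrans b = sTrans b * sTrans a := by
  ext x
  simp only [sTrans, Equiv.Perm.mul_apply, Equiv.swap_apply_def]
  grind

theorem TwoMoveStep.symm {w w' : List ℕ} : TwoMoveStep w w' → TwoMoveStep w' w := by
  rintro ⟨u, v, a, b, hab, rfl, rfl⟩
  exact ⟨u, v, b, a, hab.symm, rfl, rfl⟩

namespace TwoMoveEquiv

variable {w w' w'' : List ℕ}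

theorem refl (w : List ℕ) : TwoMoveEquiv w w := Relation.ReflTransGen.refl

theorem symm (h : TwoMoveEquiv w w') : TwoMoveEquiv w' w :=
  haveI : Std.Symm TwoMoveStep := ⟨fun _ _ => TwoMoveStep.symm⟩
  symm_of (Relation.ReflTransGen TwoMoveStep) h

theorem trans (h : TwoMoveEquiv w w') (h' : TwoMoveEquiv w' w'') : TwoMoveEquiv w w'' :=
  Relation.ReflTransGen.trans h h'

theorem append_right (h : TwoMoveEquiv w w') (x : List ℕ) : TwoMoveEquiv (w ++ x) (w' ++ x) := by
  refine Relation.ReflTransGen.lift (· ++ x) ?_ _ _ h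
  rintro _ _ ⟨u, v, a, b, hab, rfl, rfl⟩
  exact ⟨u, v ++ x, a, b, hab, by simp, by simp⟩

theorem map_succ (h : TwoMoveEquiv w w') :
    TwoMoveEquiv (w.map (· + 1)) (w'.map (· + 1)) := by
  refine Relation.ReflTransGen.lift (List.map (· + 1)) ?_ _ _ h
  rintro _ _ ⟨u, v, a, b, hab, rfl, rfl⟩
  exact ⟨u.map (· + 1), v.map (· + 1), a + 1, b + 1, by omega, by simp, by simp⟩

theorem eq_of_invariant {β : Type*} (f : List ℕ → β)
    (hf : ∀ u v a b, a + 1 < b ∨ b + 1 < a → f (u ++ a :: b :: v) = f (u ++ b :: a :: v))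
    (h : TwoMoveEquiv w w') : f w = f w' := by
  induction h with
  | refl => rfl
  | tail _ hstep ih =>
    obtain ⟨u, v, a, b, hab, rfl, rfl⟩ := hstep
    exact ih.trans (hf u v a b hab)

theorem length_eq (h : TwoMoveEquiv w w') : w.length = w'.length :=
  h.eq_of_invariant List.length fun u v a b _ => by simp

theorem count_eq (h : TwoMoveEquiv w w') (c : ℕ) : w.count c = w'.count c :=
  h.eq_of_invariant (List.count c) fun u v a b _ =>
    ((List.Perm.swap b a v).append_left u).count_eq c

theorem wordProd_eq (h : TwoMoveEquiv w w') : wordProd w = wordProd w' :=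
  h.eq_of_invariant wordProd fun u v a b hab => by
    simp only [wordProd_append, wordProd_cons]
    rw [← mul_assoc (sTrans a), sTrans_comm hab, mul_assoc]

theorem filter_pair_eq (h : TwoMoveEquiv w w') {p q : ℕ} (hpq : p + 1 = q ∨ q + 1 = p) :
    w.filter (fun x => decide (x = p ∨ x = q)) = w'.filter (fun x => decide (x = p ∨ x = q)) := by
  refine h.eq_of_invariant (List.filter _) fun u v a b hab => ?_
  simp only [List.filter_append, List.filter_cons]
  grind

end TwoMoveEquiv

theorem eq_nil_of_append_pair_eq {p q : ℕ} (hpq : p ≠ q) {l₁ l₂ r : List ℕ}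
    (hr : ∀ x ∈ r, x = q) (h : l₁ ++ [p, q] = l₂ ++ [p, q] ++ r) : r = [] := by
  obtain ⟨k, rfl⟩ : ∃ k, r = List.replicate k q :=
    ⟨r.length, List.eq_replicate_iff.2 ⟨rfl, hr⟩⟩
  have hrev := congrArg List.reverse h
  simp only [List.reverse_append, List.reverse_replicate] at hrev
  rcases k with _ | _ | k <;> simp_all [List.replicate_succ]

theorem filter_pair_eq_of_nodup {p q : ℕ} {l₁ l₂ : List ℕ} (h : (l₁ ++ p :: q :: l₂).Nodup) :
    (l₁ ++ p :: q :: l₂).filter (fun x => decide (x = p ∨ x = q)) = [p, q] := by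
  have h₁ : l₁.filter (fun x => decide (x = p ∨ x = q)) = [] := by
    rw [List.filter_eq_nil_iff]; grind
  have h₂ : l₂.filter (fun x => decide (x = p ∨ x = q)) = [] := by
    rw [List.filter_eq_nil_iff]; grind
  rw [List.filter_append, h₁, List.nil_append, List.filter_cons_of_pos (by simp),
    List.filter_cons_of_pos (by simp), h₂]

/- Two-moves never exchange neighbouring letters `p`, `q` of the block `b`, so once `p` is known
not to occur to the right of the block, neither does `q`. -/
theorem TwoMoveEquiv.tail_eq_nil {b u u' v : List ℕ} (h : TwoMoveEquiv (u ++ b) (u' ++ b ++ v))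
    (hnodup : b.Nodup) (hadj : b.IsChain fun p q => p + 1 = q ∨ q + 1 = p)
    (hhead : ∀ hb : b ≠ [], b.head hb ∉ u) (hv : v ⊆ b) : v = [] := by
  have hfilter : b.IsChain fun p q => (p + 1 = q ∨ q + 1 = p) ∧
      b.filter (fun x => decide (x = p ∨ x = q)) = [p, q] := by
    rw [List.isChain_iff_forall_rel_of_append_cons_cons] at hadj ⊢
    rintro p q l₁ l₂ rfl
    exact ⟨hadj rfl, filter_pair_eq_of_nodup hnodup⟩
  have hnotMem : ∀ x ∈ b, x ∉ v := by
    refine hfilter.induction (· ∉ v) b ?_ ?_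
    · rintro p q ⟨hpq, hb⟩ hp hq
      have hpair := h.filter_pair_eq hpq
      simp only [List.filter_append, hb] at hpair
      have hnil := eq_nil_of_append_pair_eq (by omega) (by
        intro x hx
        simp only [List.mem_filter, decide_eq_true_eq] at hx
        exact hx.2.resolve_left fun hxp => hp (hxp ▸ hx.1)) hpair
      exact absurd (decide_eq_true (Or.inr rfl)) (List.filter_eq_nil_iff.1 hnil q hq)
    · intro hb hmem
      have hcount := h.count_eq (b.head hb)
      simp only [List.count_append, List.count_eq_zero_of_not_mem (hhead hb)] at hcount
      have := List.count_pos_iff.2 hmem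
      omega
  exact List.eq_nil_iff_forall_not_mem.2 fun x hx => hnotMem x (hv hx) hx

/-! ### Normal words -/

/-- The increasing block `(a + 1, …, a + m)`, a shift of `A_m`. -/
def ascBlock (a m : ℕ) : List ℕ := List.range' (a + 1) m

/-- The decreasing block `(a + m, …, a + 1)`, a shift of `D_m`. -/
def descBlock (a m : ℕ) : List ℕ := (ascBlock a m).reverse

/-- The representative on the letters `a + 1, …, a + σ.length` of the 2-move class that is
contracted by the operations `σ`, the outermost one first (`true` for `D`, `false` for `A`). -/
def normalWord : ℕ → List Bool → List ℕ
  | _, [] => []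
  | a, true :: σ => normalWord a σ ++ descBlock a (σ.length + 1)
  | a, false :: σ => normalWord (a + 1) σ ++ ascBlock a (σ.length + 1)

theorem ascWord_eq_ascBlock (n : ℕ) : ascWord n = ascBlock 0 n := by
  simp [ascWord, ascBlock, List.range'_eq_map_range, add_comm]

theorem descWord_eq_descBlock (n : ℕ) : descWord n = descBlock 0 n := by
  rw [descWord, descBlock, ascWord_eq_ascBlock]

@[simp]
theorem length_ascBlock (a m : ℕ) : (ascBlock a m).length = m := List.length_range'

@[simp]
theorem length_descBlock (a m : ℕ) : (descBlock a m).length = m := by simp [descBlock]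

theorem mem_ascBlock {a m c : ℕ} : c ∈ ascBlock a m ↔ a + 1 ≤ c ∧ c ≤ a + m := by
  rw [ascBlock, List.mem_range'_1]
  omega

theorem mem_descBlock {a m c : ℕ} : c ∈ descBlock a m ↔ a + 1 ≤ c ∧ c ≤ a + m := by
  rw [descBlock, List.mem_reverse, mem_ascBlock]

theorem ascBlock_succ (a m : ℕ) : ascBlock a (m + 1) = ascBlock a m ++ [a + m + 1] := by
  simp [ascBlock, List.range'_1_concat, add_right_comm]

theorem descBlock_succ (a m : ℕ) : descBlock a (m + 1) = (a + m + 1) :: descBlock a m := by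
  simp [descBlock, ascBlock_succ]

theorem nodup_ascBlock (a m : ℕ) : (ascBlock a m).Nodup := List.nodup_range' 1

theorem nodup_descBlock (a m : ℕ) : (descBlock a m).Nodup :=
  List.nodup_reverse.2 (nodup_ascBlock a m)

theorem isChain_ascBlock (a m : ℕ) : (ascBlock a m).IsChain fun p q => p + 1 = q ∨ q + 1 = p :=
  (List.isChain_range' (a + 1) m 1).imp fun _ _ h => Or.inl h.symm

theorem isChain_descBlock (a m : ℕ) : (descBlock a m).IsChain fun p q => p + 1 = q ∨ q + 1 = p :=
  List.isChain_reverse.2 ((isChain_ascBlock a m).imp fun _ _ => Or.symm)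

theorem map_succ_ascBlock (a m : ℕ) : (ascBlock a m).map (· + 1) = ascBlock (a + 1) m := by
  simp only [ascBlock, add_comm _ 1, List.map_add_range']

theorem map_succ_normalWord (a : ℕ) (σ : List Bool) :
    (normalWord a σ).map (· + 1) = normalWord (a + 1) σ := by
  induction σ generalizing a with
  | nil => rfl
  | cons b σ ih =>
    cases b <;>
      simp only [normalWord, List.map_append, ih, descBlock, List.map_reverse, map_succ_ascBlock]

theorem wordProd_ascBlock (a m x : ℕ) : wordProd (ascBlock a m) x =
    if x = a + m + 1 then a + 1 else if a + 1 ≤ x ∧ x ≤ a + m then x + 1 else x := by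
  induction m generalizing x with
  | zero => simp only [ascBlock, List.range'_zero, wordProd_nil, Equiv.Perm.one_apply]; grind
  | succ m ih =>
    rw [ascBlock_succ, wordProd_append, wordProd_singleton, Equiv.Perm.mul_apply, ih]
    simp only [sTrans, Equiv.swap_apply_def]
    grind

theorem wordProd_descBlock (a m x : ℕ) : wordProd (descBlock a m) x =
    if x = a + 1 then a + m + 1 else if a + 1 < x ∧ x ≤ a + m + 1 then x - 1 else x := by
  induction m generalizing x with
  | zero =>
    simp only [descBlock, ascBlock, List.range'_zero, List.reverse_nil, wordProd_nil,
      Equiv.Perm.one_apply]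
    grind
  | succ m ih =>
    rw [descBlock_succ, wordProd_cons, Equiv.Perm.mul_apply, ih]
    simp only [sTrans, Equiv.swap_apply_def]
    grind

theorem wordProd_normalWord (a : ℕ) (σ : List Bool) (x : ℕ) : wordProd (normalWord a σ) x =
    if a + 1 ≤ x ∧ x ≤ a + σ.length + 1 then 2 * a + σ.length + 2 - x else x := by
  induction σ generalizing a x with
  | nil => simp only [normalWord, wordProd_nil, Equiv.Perm.one_apply, List.length_nil]; grind
  | cons b σ ih =>
    cases b <;>
      simp only [normalWord, wordProd_append, Equiv.Perm.mul_apply, ih, wordProd_ascBlock,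
        wordProd_descBlock, List.length_cons] <;>
      grind

/-! ### The wires of a concatenated word -/

section Append

variable {u : List ℕ} {j : ℕ}

theorem letterAt_append_left (v : List ℕ) (hj : ValidNode u j) :
    letterAt (u ++ v) j = letterAt u j :=
  List.getD_append _ _ _ _ (by have := hj.1; have := hj.2; omega)

theorem letterAt_append_right (u v : List ℕ) {i : ℕ} (hi : 1 ≤ i) :
    letterAt (u ++ v) (u.length + i) = letterAt v i := by
  rw [letterAt, List.getD_append_right _ _ _ _ (by omega), letterAt]
  congr 1
  omega

theorem stateAbove_append_left (v : List ℕ) (hj : ValidNode u j) :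
    stateAbove (u ++ v) j = stateAbove u j := by
  rw [stateAbove, List.take_append_of_le_length (by have := hj.2; omega), stateAbove]

theorem stateAbove_append_right (u v : List ℕ) {i : ℕ} (hi : 1 ≤ i) :
    stateAbove (u ++ v) (u.length + i) = wordProd u * stateAbove v i := by
  rw [stateAbove, stateAbove, ← wordProd_append, Nat.add_sub_assoc hi,
    List.take_length_add_append]

theorem wireX_append_left (v : List ℕ) (hj : ValidNode u j) : wireX (u ++ v) j = wireX u j := by
  rw [wireX, letterAt_append_left v hj, stateAbove_append_left v hj, wireX]

theorem wireY_append_left (v : List ℕ) (hj : ValidNode u j) : wireY (u ++ v) j = wireY u j := by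
  rw [wireY, letterAt_append_left v hj, stateAbove_append_left v hj, wireY]

theorem wireX_append_right (u v : List ℕ) {i : ℕ} (hi : 1 ≤ i) :
    wireX (u ++ v) (u.length + i) = wordProd u (wireX v i) := by
  rw [wireX, letterAt_append_right u v hi, stateAbove_append_right u v hi]
  rfl

theorem wireY_append_right (u v : List ℕ) {i : ℕ} (hi : 1 ≤ i) :
    wireY (u ++ v) (u.length + i) = wordProd u (wireY v i) := by
  rw [wireY, letterAt_append_right u v hi, stateAbove_append_right u v hi]
  rfl

theorem letterAt_append_cons (u : List ℕ) (c : ℕ) (v : List ℕ) :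
    letterAt (u ++ c :: v) (u.length + 1) = c :=
  letterAt_append_right u (c :: v) le_rfl

theorem wireX_append_cons (u : List ℕ) (c : ℕ) (v : List ℕ) :
    wireX (u ++ c :: v) (u.length + 1) = wordProd u c :=
  wireX_append_right u (c :: v) le_rfl

theorem wireY_append_cons (u : List ℕ) (c : ℕ) (v : List ℕ) :
    wireY (u ++ c :: v) (u.length + 1) = wordProd u (c + 1) :=
  wireY_append_right u (c :: v) le_rfl

theorem ValidNode.append_right (hj : ValidNode u j) (v : List ℕ) : ValidNode (u ++ v) j :=
  ⟨hj.1, hj.2.trans (by simp)⟩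

theorem validNode_concat (u : List ℕ) (c : ℕ) : ValidNode (u ++ [c]) (u.length + 1) :=
  ⟨by omega, by simp⟩

end Append

/-! ### Reversing words and their decomposition -/

theorem exists_crossing {u : List ℕ} {r s : ℕ} (hrs : r < s)
    (h : (wordProd u).symm s < (wordProd u).symm r) :
    ∃ j, ValidNode u j ∧ wireX u j = r ∧ wireY u j = s := by
  induction u using List.reverseRecOn with
  | nil => exact absurd h hrs.not_gt
  | append_singleton u c ih =>
    by_cases h' : (wordProd u).symm s < (wordProd u).symm r
    · obtain ⟨j, hj, hX, hY⟩ := ih h'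
      exact ⟨j, hj.append_right _, by rw [wireX_append_left _ hj, hX],
        by rw [wireY_append_left _ hj, hY]⟩
    · have hsymm : ∀ x, (wordProd (u ++ [c])).symm x = sTrans c ((wordProd u).symm x) := by
        simp [Equiv.symm_apply_eq, wordProd_append, wordProd_singleton, sTrans]
      have hne : (wordProd u).symm s ≠ (wordProd u).symm r :=
        fun hh => hrs.ne' ((wordProd u).symm.injective hh)
      -- The last transposition inverts only the wires in the columns `c` and `c + 1`.
      have hcol : (wordProd u).symm r = c ∧ (wordProd u).symm s = c + 1 := by
        simp only [hsymm, sTrans, Equiv.swap_apply_def] at h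
        grind
      exact ⟨u.length + 1, validNode_concat u c,
        by rw [wireX_append_cons, ← hcol.1, Equiv.apply_symm_apply],
        by rw [wireY_append_cons, ← hcol.2, Equiv.apply_symm_apply]⟩

theorem wordProd_fixes_and_letters_mem {w : List ℕ} {s : Set ℕ}
    (h : ∀ j, ValidNode w j → wireX w j ∈ s ∧ wireY w j ∈ s) :
    (∀ x ∉ s, wordProd w x = x) ∧ ∀ c ∈ w, c ∈ s ∧ c + 1 ∈ s := by
  induction w using List.reverseRecOn with
  | nil => simp [wordProd_nil]
  | append_singleton w c ih =>
    obtain ⟨hfix, hletters⟩ := ih fun j hj => by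
      simpa only [wireX_append_left [c] hj, wireY_append_left [c] hj]
        using h j (hj.append_right _)
    have hlast := h (w.length + 1) (validNode_concat w c)
    rw [wireX_append_cons, wireY_append_cons] at hlast
    have hc : c ∈ s ∧ c + 1 ∈ s :=
      ⟨by_contra fun hc => hc (hfix c hc ▸ hlast.1), by_contra fun hc => hc (hfix _ hc ▸ hlast.2)⟩
    refine ⟨fun x hx => ?_, by simpa [or_imp, forall_and, hc] using hletters⟩
    rw [wordProd_append, wordProd_singleton, Equiv.Perm.mul_apply, sTrans,
      Equiv.swap_apply_of_ne_of_ne (by rintro rfl; exact hx hc.1) (by rintro rfl; exact hx hc.2),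
      hfix x hx]

/-- The word `w` has as many letters as a reduced word of the longest permutation of
`a + 1, …, a + n + 1`, and it reverses these wires. -/
structure IsReversing (a n : ℕ) (w : List ℕ) : Prop where
  length_eq : w.length = Dim n
  wordProd_apply : ∀ x, a + 1 ≤ x → x ≤ a + n + 1 → wordProd w x = 2 * a + n + 2 - x

theorem IsReduced.isReversing {n : ℕ} {w : List ℕ} (h : IsReduced n w) : IsReversing 0 n w where
  length_eq := h.1
  wordProd_apply x h₁ h₂ := by
    have hw₀ : wordProd w x = if 1 ≤ x ∧ x ≤ n + 1 then n + 2 - x else x := by rw [h.2.2]; rfl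
    rw [hw₀, if_pos (by omega)]
    omega

theorem dim_succ (n : ℕ) : Dim (n + 1) = Dim n + (n + 1) := by
  rw [Dim, Dim, show (n + 1) * (n + 1 + 1) = n * (n + 1) + (n + 1) * 2 by ring,
    Nat.add_mul_div_right _ _ (by norm_num)]

namespace IsReversing

variable {a n : ℕ} {u w w' : List ℕ}

/- All pairs of the `n + 1` reversed wires have to cross, and there are only `n(n + 1)/2` nodes. -/
theorem wires_mem_Icc (h : IsReversing a n w) {j : ℕ} (hj : ValidNode w j) :
    wireX w j ∈ Set.Icc (a + 1) (a + n + 1) ∧ wireY w j ∈ Set.Icc (a + 1) (a + n + 1) := by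
  set wires : ℕ → Finset ℕ := fun j => {wireX w j, wireY w j} with hwires
  have hsymm : ∀ x, a + 1 ≤ x → x ≤ a + n + 1 → (wordProd w).symm x = 2 * a + n + 2 - x := by
    intro x h₁ h₂
    rw [Equiv.symm_apply_eq, h.wordProd_apply _ (by omega) (by omega)]
    omega
  have hcross : (Finset.Icc (a + 1) (a + n + 1)).powersetCard 2 ⊆
      (Finset.Icc 1 w.length).image wires := by
    intro p hp
    obtain ⟨hp, hcard⟩ := Finset.mem_powersetCard.1 hp
    obtain ⟨r, s, hrs, rfl⟩ : ∃ r s, r < s ∧ p = {r, s} := by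
      obtain ⟨r, s, hne, rfl⟩ := Finset.card_eq_two.1 hcard
      rcases hne.lt_or_gt with hlt | hlt
      exacts [⟨r, s, hlt, rfl⟩, ⟨s, r, hlt, Finset.pair_comm r s⟩]
    simp only [Finset.insert_subset_iff, Finset.singleton_subset_iff, Finset.mem_Icc] at hp
    obtain ⟨j, hj, hX, hY⟩ := exists_crossing (u := w) hrs (by
      rw [hsymm r hp.1.1 hp.1.2, hsymm s hp.2.1 hp.2.2]
      omega)
    exact Finset.mem_image.2 ⟨j, Finset.mem_Icc.2 hj, by rw [hwires, ← hX, ← hY]⟩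
  have hcard : ((Finset.Icc 1 w.length).image wires).card ≤
      ((Finset.Icc (a + 1) (a + n + 1)).powersetCard 2).card := by
    refine Finset.card_image_le.trans (le_of_eq ?_)
    rw [Finset.card_powersetCard, Nat.card_Icc, Nat.card_Icc, h.length_eq,
      show a + n + 1 + 1 - (a + 1) = n + 1 by omega, Nat.choose_two_right, Nat.add_sub_cancel,
      Nat.add_sub_cancel, Dim, mul_comm n]
  have hmem := Finset.mem_image_of_mem wires (Finset.mem_Icc.2 hj)
  rw [← Finset.eq_of_subset_of_card_le hcross hcard] at hmem
  simpa [hwires, Finset.insert_subset_iff] using (Finset.mem_powersetCard.1 hmem).1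

theorem letters (h : IsReversing a n w) : ∀ c ∈ w, a + 1 ≤ c ∧ c ≤ a + n := by
  intro c hc
  have := (wordProd_fixes_and_letters_mem fun _ => h.wires_mem_Icc).2 c hc
  simp only [Set.mem_Icc] at this
  omega

theorem congr (h : IsReversing a n w) (e : TwoMoveEquiv w w') : IsReversing a n w' :=
  ⟨e.length_eq ▸ h.length_eq, e.wordProd_eq ▸ h.wordProd_apply⟩

theorem of_append_descBlock (h : IsReversing 0 (n + 1) (u ++ descBlock 0 (n + 1))) :
    IsReversing 0 n u where
  length_eq := by
    have := h.length_eq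
    rw [List.length_append, length_descBlock, dim_succ] at this
    omega
  wordProd_apply x h₁ h₂ := by
    have := h.wordProd_apply (x + 1) (by omega) (by omega)
    rw [wordProd_append, Equiv.Perm.mul_apply, wordProd_descBlock, if_neg (by omega),
      if_pos (by omega), Nat.add_sub_cancel] at this
    omega

theorem of_append_ascBlock (h : IsReversing 0 (n + 1) (u ++ ascBlock 0 (n + 1))) :
    IsReversing 1 n u where
  length_eq := by
    have := h.length_eq
    rw [List.length_append, length_ascBlock, dim_succ] at this
    omega
  wordProd_apply x h₁ h₂ := by
    have := h.wordProd_apply (x - 1) (by omega) (by omega)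
    rw [wordProd_append, Equiv.Perm.mul_apply, wordProd_ascBlock, if_neg (by omega),
      if_pos (by omega), Nat.sub_add_cancel (by omega)] at this
    omega

theorem of_map_succ (h : IsReversing (a + 1) n (w.map (· + 1))) : IsReversing a n w where
  length_eq := by simpa using h.length_eq
  wordProd_apply x h₁ h₂ := by
    have := h.wordProd_apply (x + 1) (by omega) (by omega)
    rw [wordProd_map_succ] at this
    omega

theorem equiv_append_descBlock (h : IsReversing 0 (n + 1) w) (hcon : IsContractionD (n + 1) w w')
    (hind : indD (n + 1) w = 0) : TwoMoveEquiv w (w' ++ descBlock 0 (n + 1)) := by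
  obtain ⟨u', v', he', hw'⟩ := hcon
  obtain ⟨u, v, hv, he⟩ : (0 : ℕ) ∈ {s | ∃ u v : List ℕ, v.length = s ∧
      TwoMoveEquiv w (u ++ descWord (n + 1) ++ v)} := hind ▸ Nat.sInf_mem ⟨_, u', v', rfl, he'⟩
  rw [List.length_eq_zero_iff] at hv
  rw [hv, List.append_nil, descWord_eq_descBlock] at he
  rw [descWord_eq_descBlock] at he'
  have hnil : v' = [] := by
    refine (he.symm.trans he').tail_eq_nil (nodup_descBlock _ _) (isChain_descBlock _ _) ?_ ?_
    · simp only [descBlock_succ, List.head_cons]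
      intro _ hmem
      have := (h.congr he).of_append_descBlock.letters _ hmem
      omega
    · intro x hx
      exact mem_descBlock.2 ((h.congr he').letters x (by simp [hx]))
  simpa [hnil, hw'] using he'

theorem equiv_append_ascBlock (h : IsReversing 0 (n + 1) w) (hcon : IsContractionA (n + 1) w w')
    (hind : indA (n + 1) w = 0) : TwoMoveEquiv w (w'.map (· + 1) ++ ascBlock 0 (n + 1)) := by
  obtain ⟨u', v', he', hw'⟩ := hcon
  obtain ⟨u, v, hv, he⟩ : (0 : ℕ) ∈ {s | ∃ u v : List ℕ, v.length = s ∧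
      TwoMoveEquiv w (u ++ ascWord (n + 1) ++ v)} := hind ▸ Nat.sInf_mem ⟨_, u', v', rfl, he'⟩
  rw [List.length_eq_zero_iff] at hv
  rw [hv, List.append_nil, ascWord_eq_ascBlock] at he
  rw [ascWord_eq_ascBlock] at he'
  have hnil : v' = [] := by
    refine (he.symm.trans he').tail_eq_nil (nodup_ascBlock _ _) (isChain_ascBlock _ _) ?_ ?_
    · simp only [ascBlock, List.range'_succ, List.head_cons]
      intro _ hmem
      have := (h.congr he).of_append_ascBlock.letters _ hmem
      omega
    · intro x hx
      exact mem_ascBlock.2 ((h.congr he').letters x (by simp [hx]))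
  have hshift : w'.map (· + 1) = u' := by
    rw [hw', hnil, List.append_nil, List.map_map]
    refine (List.map_congr_left fun x hx => ?_).trans (List.map_id u')
    have := (h.congr he').letters x (by simp [hx])
    simp only [Function.comp_apply, id_eq]
    omega
  simpa [hnil, hshift] using he'

end IsReversing

theorem SimplicialWord.exists_equiv_normalWord {n : ℕ} {w : List ℕ} (hw : SimplicialWord n w)
    (hrev : IsReversing 0 n w) :
    ∃ τ : List Bool, τ.length = n ∧ TwoMoveEquiv w (normalWord 0 τ) := by
  obtain ⟨σ, c, rfl, hc⟩ := hw
  induction n with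
  | zero =>
    have hnil := List.length_eq_zero_iff.1 hrev.length_eq
    exact ⟨[], rfl, hnil ▸ TwoMoveEquiv.refl _⟩
  | succ n ih =>
    have hn := hc (n + 1) (by omega) le_rfl
    specialize ih fun k h₁ h₂ => hc k h₁ (by omega)
    cases hσ : σ (n + 1) with
    | true =>
      rw [hσ, if_pos rfl, Nat.add_sub_cancel] at hn
      have he := hrev.equiv_append_descBlock hn.1 hn.2
      obtain ⟨τ, rfl, hτ⟩ := ih (hrev.congr he).of_append_descBlock
      exact ⟨true :: τ, rfl, he.trans (hτ.append_right _)⟩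
    | false =>
      rw [hσ, if_neg (by simp), Nat.add_sub_cancel] at hn
      have he := hrev.equiv_append_ascBlock hn.1 hn.2
      obtain ⟨τ, rfl, hτ⟩ := ih (hrev.congr he).of_append_ascBlock.of_map_succ
      refine ⟨false :: τ, rfl, he.trans ?_⟩
      simpa only [normalWord, map_succ_normalWord] using hτ.map_succ.append_right _

/-! ### String and `λ`-inequalities of sequences indexed by the nodes -/

/-- The condition of `IsGPPath` that the path `(k, ms)` travels legally from `L_k` to `L_{k+1}`. Its
clause on the first stretch of the path is dropped: it holds by `not_forbidden_start`. -/
def LegalPath (w : List ℕ) (k : ℕ) : List ℕ → Prop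
  | [] => False
  | m :: ms => ValidNode w m ∧ NodeOnWire w m k ∧ TravelOK w k (otherWire w m k) m ms

/-- The value `∑ a_j T_j` of the string inequality of the path leaving wire `r` at the switching
nodes `ms`, for a sequence `T` indexed by the 1-based nodes. -/
def pathValue (w : List ℕ) : ℕ → List ℕ → (ℕ → ℝ) → ℝ
  | _, [], _ => 0
  | r, m :: ms, T =>
      (if r < otherWire w m r then 1 else -1) * T m + pathValue w (otherWire w m r) ms T

/-- The string inequalities of the word `w` for a sequence `T` indexed by the 1-based nodes; only
the values of `T` at nodes of `w` matter. -/
def StringIneqs (w : List ℕ) (T : ℕ → ℝ) : Prop :=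
  ∀ k ms, LegalPath w k ms → (visitList w k ms).Nodup → 0 ≤ pathValue w k ms T

/-- The `λ`-inequalities of the word `w` for a sequence `T` indexed by the 1-based nodes, with an
arbitrary real number `R c` in place of the coefficient of the weight in column `c`. -/
def LambdaIneqs (w : List ℕ) (R T : ℕ → ℝ) : Prop :=
  ∀ j, ValidNode w j →
    T j ≤ R (letterAt w j) + ∑ k ∈ Finset.Ioc j w.length, lamCoeff w j k * T k

theorem not_forbidden_start (w : List ℕ) (k j : ℕ) : ¬ Forbidden w k j k := by
  unfold Forbidden
  omega

theorem not_forbidden_end (w : List ℕ) (k j : ℕ) : ¬ Forbidden w k j (k + 1) := by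
  unfold Forbidden
  omega

theorem travelOK_nil {w : List ℕ} {k r a : ℕ} : TravelOK w k r a [] ↔ r = k + 1 :=
  and_iff_left_of_imp fun h j _ => h ▸ not_forbidden_end w k j

theorem isGPPath_iff {n : ℕ} {w : List ℕ} {k : ℕ} {ms : List ℕ} :
    IsGPPath n w k ms ↔ 1 ≤ k ∧ k ≤ n ∧ LegalPath w k ms ∧ (visitList w k ms).Nodup := by
  cases ms with
  | nil => exact Iff.rfl
  | cons m ms => simp only [IsGPPath, LegalPath, not_forbidden_start, not_false_eq_true,
      implies_true, true_and]

section LegalPath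

variable {w : List ℕ} {k : ℕ}

theorem nodeOnWire_otherWire {j r : ℕ} : NodeOnWire w j (otherWire w j r) := by
  unfold NodeOnWire otherWire
  split_ifs <;> simp

theorem TravelOK.validNode : ∀ {r a : ℕ} {ms : List ℕ},
    TravelOK w k r a ms → ∀ m ∈ ms, ValidNode w m
  | _, _, [], _ => by simp
  | _, _, _ :: _, h => List.forall_mem_cons.2 ⟨h.1, h.2.2.2.2.validNode⟩

theorem TravelOK.exists_nodeOnWire_end : ∀ {r a : ℕ} {ms : List ℕ}, ValidNode w a →
    NodeOnWire w a r → TravelOK w k r a ms → ∃ j, ValidNode w j ∧ NodeOnWire w j (k + 1)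
  | _, a, [], ha, hra, h => ⟨a, ha, h.1 ▸ hra⟩
  | _, _, _ :: _, _, _, ⟨hm, _, _, _, h⟩ => h.exists_nodeOnWire_end hm nodeOnWire_otherWire

theorem LegalPath.validNode : ∀ {ms : List ℕ}, LegalPath w k ms → ∀ m ∈ ms, ValidNode w m
  | _ :: _, h => List.forall_mem_cons.2 ⟨h.1, h.2.2.validNode⟩

theorem LegalPath.exists_nodeOnWire_start : ∀ {ms : List ℕ}, LegalPath w k ms →
    ∃ j, ValidNode w j ∧ NodeOnWire w j k
  | m :: _, ⟨hm, hkm, _⟩ => ⟨m, hm, hkm⟩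

theorem LegalPath.exists_nodeOnWire_end : ∀ {ms : List ℕ}, LegalPath w k ms →
    ∃ j, ValidNode w j ∧ NodeOnWire w j (k + 1)
  | _ :: _, ⟨hm, _, h⟩ => h.exists_nodeOnWire_end hm nodeOnWire_otherWire

end LegalPath

theorem sum_coeff_mul_eq_pathValue {w : List ℕ} {N : ℕ} (hw : w.length = N) (T : ℕ → ℝ) :
    ∀ (r : ℕ) {ms : List ℕ}, (∀ m ∈ ms, ValidNode w m) →
      ∑ j : Fin N, coeff w r ms (j + 1) * T (j + 1) = pathValue w r ms T
  | r, [], _ => by simp [coeff, pathSwitches, pathValue]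
  | r, m :: ms, h => by
    obtain ⟨hm, hms⟩ := List.forall_mem_cons.1 h
    have hm₁ := hm.1
    have hmN : m - 1 < N := by have := hm.2; omega
    have ih := sum_coeff_mul_eq_pathValue hw T (otherWire w m r) hms
    simp only [coeff] at ih
    simp only [coeff, pathSwitches, pathValue, List.map_cons, List.sum_cons, add_mul,
      Finset.sum_add_distrib, ih]
    rw [Finset.sum_eq_single_of_mem (⟨m - 1, hmN⟩ : Fin N) (Finset.mem_univ _), if_pos (by grind),
      Nat.sub_add_cancel hm₁]
    intro j _ hj
    rw [if_neg (by grind), zero_mul]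

theorem sum_fin_add_one (N : ℕ) (f : ℕ → ℝ) :
    ∑ k : Fin N, f (k + 1) = ∑ k ∈ Finset.Icc 1 N, f k := by
  rw [Fin.sum_univ_eq_sum_range (fun i => f (i + 1)) N, Finset.range_eq_Ico,
    Finset.sum_Ico_add' f 0 N 1]
  rfl

theorem sum_Ioc_eq_sum_Icc_ite (j N : ℕ) (f : ℕ → ℝ) :
    ∑ k ∈ Finset.Ioc j N, f k = ∑ k ∈ Finset.Icc 1 N, if j < k then f k else 0 := by
  rw [← Finset.sum_filter]
  congr 1
  ext k
  simp only [Finset.mem_Ioc, Finset.mem_filter, Finset.mem_Icc]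
  omega

theorem LegalPath.mem_Icc {n : ℕ} {w : List ℕ} (hw : IsReduced n w) {k : ℕ} {ms : List ℕ}
    (h : LegalPath w k ms) : 1 ≤ k ∧ k ≤ n := by
  obtain ⟨j, hj, hkj⟩ := h.exists_nodeOnWire_start
  obtain ⟨j', hj', hkj'⟩ := h.exists_nodeOnWire_end
  have hwires := hw.isReversing.wires_mem_Icc hj
  have hwires' := hw.isReversing.wires_mem_Icc hj'
  simp only [Set.mem_Icc, NodeOnWire] at *
  omega

theorem mem_stringCone_iff {n : ℕ} {w : List ℕ} (hw : IsReduced n w) (T : ℕ → ℝ) :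
    (fun j : Fin (Dim n) => T (j + 1)) ∈ stringCone n w ↔ StringIneqs w T := by
  simp only [stringCone, Set.mem_ofPred_eq, GP, Prod.forall, isGPPath_iff]
  have hval : ∀ k ms, LegalPath w k ms →
      stringIneq n w (k, ms) (fun j => T (j + 1)) = pathValue w k ms T :=
    fun k ms h => sum_coeff_mul_eq_pathValue hw.1 T k h.validNode
  exact ⟨fun h k ms h₁ h₂ => hval k ms h₁ ▸ h k ms ⟨(h₁.mem_Icc hw).1, (h₁.mem_Icc hw).2, h₁, h₂⟩,
    fun h k ms ⟨_, _, h₁, h₂⟩ => hval k ms h₁ ▸ h k ms h₁ h₂⟩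

theorem mem_lamCone_iff {n : ℕ} {w : List ℕ} (hw : w.length = Dim n) (lam : ℕ → ℤ) (T : ℕ → ℝ) :
    (fun j : Fin (Dim n) => T (j + 1)) ∈ lamCone n w lam ↔
      LambdaIneqs w (fun c => (lam c : ℝ)) T := by
  have hsum : ∀ j : ℕ, ∑ k : Fin (Dim n),
      (if j < (k : ℕ) then lamCoeff w (j + 1) (k + 1) else 0) * T (k + 1) =
        ∑ k ∈ Finset.Ioc (j + 1) w.length, lamCoeff w (j + 1) k * T k := by
    intro j
    rw [sum_Ioc_eq_sum_Icc_ite, hw, ← sum_fin_add_one (Dim n)]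
    simp only [Nat.add_lt_add_iff_right, ite_mul, zero_mul]
  simp only [lamCone, Set.mem_ofPred_eq, LamIneq, hsum]
  constructor
  · intro h j hj
    obtain ⟨i, rfl⟩ := Nat.exists_eq_add_of_le' hj.1
    exact h ⟨i, hw ▸ hj.2⟩
  · exact fun h j => h (j + 1) ⟨by omega, by omega⟩

/-! ### Nodes along a wire -/

theorem mem_nodesOn {w : List ℕ} {r j : ℕ} :
    j ∈ nodesOn w r ↔ ValidNode w j ∧ NodeOnWire w j r := by
  simp only [nodesOn, List.mem_filter, List.mem_map, List.mem_range, decide_eq_true_eq, ValidNode]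
  constructor
  · rintro ⟨⟨x, hx, rfl⟩, h⟩
    exact ⟨⟨by omega, by omega⟩, h⟩
  · rintro ⟨⟨h₁, h₂⟩, h⟩
    exact ⟨⟨j - 1, by omega, by omega⟩, h⟩

theorem mem_segList {w : List ℕ} {r a b j : ℕ} :
    j ∈ segList w r a b ↔ ValidNode w j ∧ NodeOnWire w j r ∧ min a b < j ∧ j < max a b := by
  simp only [segList, List.mem_filter, mem_nodesOn, decide_eq_true_eq, and_assoc]

theorem mem_tailList {w : List ℕ} {r a j : ℕ} :
    j ∈ tailList w r a ↔ ValidNode w j ∧ NodeOnWire w j r ∧ a < j := by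
  simp only [tailList, List.mem_filter, mem_nodesOn, decide_eq_true_eq, and_assoc]

theorem nodup_nodesOn (w : List ℕ) (r : ℕ) : (nodesOn w r).Nodup :=
  (List.nodup_range.map (add_left_injective 1)).filter _

theorem nodup_segList (w : List ℕ) (r a b : ℕ) : (segList w r a b).Nodup :=
  (nodup_nodesOn w r).filter _

theorem nodup_tailList (w : List ℕ) (r a : ℕ) : (tailList w r a).Nodup :=
  (nodup_nodesOn w r).filter _

/-! ### Isomorphisms of wiring diagrams -/

/-- A relabelling `p` of the nodes under which the words `w` and `w'` have the same wiring diagram: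
the nodes keep their columns and wires, and the relative order is kept for nodes on a common wire
and for nodes in equal or neighbouring columns, which are the comparisons entering the string and
the `λ`-inequalities. -/
structure DiagramIso (w w' : List ℕ) (p : Equiv.Perm ℕ) : Prop where
  validNode_iff : ∀ j, ValidNode w' (p j) ↔ ValidNode w j
  letterAt_eq : ∀ j, ValidNode w j → letterAt w' (p j) = letterAt w j
  wireX_eq : ∀ j, ValidNode w j → wireX w' (p j) = wireX w j
  wireY_eq : ∀ j, ValidNode w j → wireY w' (p j) = wireY w j
  lt_iff_of_wire : ∀ j j' r, ValidNode w j → ValidNode w j' → NodeOnWire w j r →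
    NodeOnWire w j' r → (p j < p j' ↔ j < j')
  lt_iff_of_letter : ∀ j j', ValidNode w j → ValidNode w j' → letterAt w j ≤ letterAt w j' + 1 →
    letterAt w j' ≤ letterAt w j + 1 → (p j < p j' ↔ j < j')

namespace DiagramIso

variable {w w' w'' : List ℕ} {p q : Equiv.Perm ℕ} {k r a b j m : ℕ} {ms : List ℕ}

theorem refl (w : List ℕ) : DiagramIso w w 1 where
  validNode_iff _ := Iff.rfl
  letterAt_eq _ _ := rfl
  wireX_eq _ _ := rfl
  wireY_eq _ _ := rfl
  lt_iff_of_wire _ _ _ _ _ _ _ := Iff.rfl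
  lt_iff_of_letter _ _ _ _ _ _ := Iff.rfl

theorem nodeOnWire_iff (H : DiagramIso w w' p) (hj : ValidNode w j) :
    NodeOnWire w' (p j) r ↔ NodeOnWire w j r := by
  rw [NodeOnWire, H.wireX_eq j hj, H.wireY_eq j hj, NodeOnWire]

theorem symm (H : DiagramIso w w' p) : DiagramIso w' w p.symm where
  validNode_iff j := by rw [← H.validNode_iff, p.apply_symm_apply]
  letterAt_eq j := by
    obtain ⟨j, rfl⟩ := p.surjective j
    rw [H.validNode_iff, p.symm_apply_apply]
    exact fun hj => (H.letterAt_eq j hj).symm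
  wireX_eq j := by
    obtain ⟨j, rfl⟩ := p.surjective j
    rw [H.validNode_iff, p.symm_apply_apply]
    exact fun hj => (H.wireX_eq j hj).symm
  wireY_eq j := by
    obtain ⟨j, rfl⟩ := p.surjective j
    rw [H.validNode_iff, p.symm_apply_apply]
    exact fun hj => (H.wireY_eq j hj).symm
  lt_iff_of_wire j j' r := by
    obtain ⟨j, rfl⟩ := p.surjective j
    obtain ⟨j', rfl⟩ := p.surjective j'
    simp only [H.validNode_iff, p.symm_apply_apply]
    intro hj hj' hr hr'
    exact (H.lt_iff_of_wire j j' r hj hj' ((H.nodeOnWire_iff hj).1 hr)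
      ((H.nodeOnWire_iff hj').1 hr')).symm
  lt_iff_of_letter j j' := by
    obtain ⟨j, rfl⟩ := p.surjective j
    obtain ⟨j', rfl⟩ := p.surjective j'
    simp only [H.validNode_iff, p.symm_apply_apply]
    intro hj hj'
    rw [H.letterAt_eq j hj, H.letterAt_eq j' hj']
    exact fun h h' => (H.lt_iff_of_letter j j' hj hj' h h').symm

theorem trans (H : DiagramIso w w' p) (H' : DiagramIso w' w'' q) :
    DiagramIso w w'' (p.trans q) where
  validNode_iff j := (H'.validNode_iff _).trans (H.validNode_iff j)
  letterAt_eq j hj := (H'.letterAt_eq _ ((H.validNode_iff j).2 hj)).trans (H.letterAt_eq j hj)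
  wireX_eq j hj := (H'.wireX_eq _ ((H.validNode_iff j).2 hj)).trans (H.wireX_eq j hj)
  wireY_eq j hj := (H'.wireY_eq _ ((H.validNode_iff j).2 hj)).trans (H.wireY_eq j hj)
  lt_iff_of_wire j j' r hj hj' hr hr' :=
    (H'.lt_iff_of_wire _ _ r ((H.validNode_iff j).2 hj) ((H.validNode_iff j').2 hj')
      ((H.nodeOnWire_iff hj).2 hr) ((H.nodeOnWire_iff hj').2 hr')).trans
      (H.lt_iff_of_wire j j' r hj hj' hr hr')
  lt_iff_of_letter j j' hj hj' h h' := by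
    refine (H'.lt_iff_of_letter _ _ ((H.validNode_iff j).2 hj) ((H.validNode_iff j').2 hj')
      ?_ ?_).trans (H.lt_iff_of_letter j j' hj hj' h h') <;>
      rwa [H.letterAt_eq j hj, H.letterAt_eq j' hj']

theorem otherWire_eq (H : DiagramIso w w' p) (hj : ValidNode w j) :
    otherWire w' (p j) r = otherWire w j r := by
  rw [otherWire, H.wireX_eq j hj, H.wireY_eq j hj, otherWire]

theorem forbidden_iff (H : DiagramIso w w' p) (hj : ValidNode w j) :
    Forbidden w' k (p j) r ↔ Forbidden w k j r := by
  rw [Forbidden, H.otherWire_eq hj, Forbidden]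

theorem mem_tailList_iff (H : DiagramIso w w' p) (ha : ValidNode w a) (hra : NodeOnWire w a r) :
    p j ∈ tailList w' r (p a) ↔ j ∈ tailList w r a := by
  rw [mem_tailList, mem_tailList, H.validNode_iff]
  refine and_congr_right fun hj => ?_
  rw [H.nodeOnWire_iff hj]
  exact and_congr_right fun hr => H.lt_iff_of_wire a j r ha hj hra hr

theorem mem_segList_iff (H : DiagramIso w w' p) (ha : ValidNode w a) (hra : NodeOnWire w a r)
    (hb : ValidNode w b) (hrb : NodeOnWire w b r) :
    p j ∈ segList w' r (p a) (p b) ↔ j ∈ segList w r a b := by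
  rw [mem_segList, mem_segList, H.validNode_iff]
  refine and_congr_right fun hj => ?_
  rw [H.nodeOnWire_iff hj]
  refine and_congr_right fun hr => ?_
  rw [min_lt_iff, min_lt_iff, lt_max_iff, lt_max_iff, H.lt_iff_of_wire a j r ha hj hra hr,
    H.lt_iff_of_wire b j r hb hj hrb hr, H.lt_iff_of_wire j a r hj ha hr hra,
    H.lt_iff_of_wire j b r hj hb hr hrb]

theorem travelOK (H : DiagramIso w w' p) : ∀ {r a : ℕ} {ms : List ℕ}, ValidNode w a →
    NodeOnWire w a r → TravelOK w k r a ms → TravelOK w' k r (p a) (ms.map p)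
  | _, _, [], _, _, h => travelOK_nil.2 h.1
  | r, a, m :: ms, ha, hra, ⟨hm, hrm, hdir, hseg, hrest⟩ => by
    refine ⟨(H.validNode_iff m).2 hm, (H.nodeOnWire_iff hm).2 hrm, ?_, ?_, ?_⟩
    · rwa [H.lt_iff_of_wire m a r hm ha hrm hra, H.lt_iff_of_wire a m r ha hm hra hrm]
    · intro j hj
      obtain ⟨j, rfl⟩ := p.surjective j
      rw [H.mem_segList_iff ha hra hm hrm] at hj
      rw [H.forbidden_iff (mem_segList.1 hj).1]
      exact hseg j hj
    · rw [H.otherWire_eq hm]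
      exact H.travelOK hm nodeOnWire_otherWire hrest

theorem legalPath (H : DiagramIso w w' p) : ∀ {ms : List ℕ},
    LegalPath w k ms → LegalPath w' k (ms.map p)
  | m :: ms, ⟨hm, hkm, hrest⟩ => by
    refine ⟨(H.validNode_iff m).2 hm, (H.nodeOnWire_iff hm).2 hkm, ?_⟩
    rw [H.otherWire_eq hm]
    exact H.travelOK hm nodeOnWire_otherWire hrest

theorem tailList_perm (H : DiagramIso w w' p) (ha : ValidNode w a) (hra : NodeOnWire w a r) :
    (tailList w' r (p a)).Perm ((tailList w r a).map p) := by
  rw [List.perm_ext_iff_of_nodup (nodup_tailList _ _ _) ((nodup_tailList _ _ _).map p.injective)]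
  intro j
  obtain ⟨j, rfl⟩ := p.surjective j
  rw [H.mem_tailList_iff ha hra, List.mem_map_of_injective p.injective]

theorem segList_perm (H : DiagramIso w w' p) (ha : ValidNode w a) (hra : NodeOnWire w a r)
    (hb : ValidNode w b) (hrb : NodeOnWire w b r) :
    (segList w' r (p a) (p b)).Perm ((segList w r a b).map p) := by
  rw [List.perm_ext_iff_of_nodup (nodup_segList _ _ _ _)
    ((nodup_segList _ _ _ _).map p.injective)]
  intro j
  obtain ⟨j, rfl⟩ := p.surjective j
  rw [H.mem_segList_iff ha hra hb hrb, List.mem_map_of_injective p.injective]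

theorem visitTail_perm (H : DiagramIso w w' p) : ∀ {r a : ℕ} {ms : List ℕ}, ValidNode w a →
    NodeOnWire w a r → TravelOK w k r a ms →
      (visitTail w' r (p a) (ms.map p)).Perm ((visitTail w r a ms).map p)
  | _, _, [], ha, hra, _ => H.tailList_perm ha hra
  | r, a, m :: ms, ha, hra, ⟨hm, hrm, _, _, hrest⟩ => by
    simp only [visitTail, List.map_cons, List.map_append, H.otherWire_eq hm]
    exact (H.segList_perm ha hra hm hrm).append
      ((H.visitTail_perm hm nodeOnWire_otherWire hrest).cons _)

theorem nodup_visitList (H : DiagramIso w w' p) : ∀ {ms : List ℕ}, LegalPath w k ms →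
    (visitList w k ms).Nodup → (visitList w' k (ms.map p)).Nodup
  | m :: ms, ⟨hm, hkm, hrest⟩, hnodup => by
    have hperm : (visitList w' k ((m :: ms).map p)).Perm ((visitList w k (m :: ms)).map p) := by
      simp only [visitList, List.map_cons, List.map_append, H.otherWire_eq hm]
      exact (H.tailList_perm hm hkm).append
        ((H.visitTail_perm hm nodeOnWire_otherWire hrest).cons _)
    exact hperm.nodup_iff.2 (hnodup.map p.injective)

theorem pathValue_map (H : DiagramIso w w' p) (T : ℕ → ℝ) : ∀ {r : ℕ} {ms : List ℕ},
    (∀ m ∈ ms, ValidNode w m) → pathValue w' r (ms.map p) T = pathValue w r ms (T ∘ p)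
  | _, [], _ => rfl
  | r, m :: ms, h => by
    obtain ⟨hm, hms⟩ := List.forall_mem_cons.1 h
    rw [List.map_cons, pathValue, pathValue, H.otherWire_eq hm, H.pathValue_map T hms,
      Function.comp_apply]

theorem stringIneqs_comp (H : DiagramIso w w' p) {T : ℕ → ℝ} (hT : StringIneqs w' T) :
    StringIneqs w (T ∘ p) := by
  intro k ms hms hnodup
  rw [← H.pathValue_map T hms.validNode]
  exact hT k _ (H.legalPath hms) (H.nodup_visitList hms hnodup)

theorem stringIneqs_comp_iff (H : DiagramIso w w' p) (T : ℕ → ℝ) :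
    StringIneqs w (T ∘ p) ↔ StringIneqs w' T := by
  refine ⟨fun h => ?_, H.stringIneqs_comp⟩
  have hT := H.symm.stringIneqs_comp h
  rwa [Function.comp_assoc, p.self_comp_symm, Function.comp_id] at hT

theorem lamCoeff_eq (H : DiagramIso w w' p) (hj : ValidNode w j) (hm : ValidNode w m) :
    lamCoeff w' (p j) (p m) = lamCoeff w j m := by
  rw [lamCoeff, H.letterAt_eq j hj, H.letterAt_eq m hm, lamCoeff]

theorem lambdaIneqs_comp (H : DiagramIso w w' p) {R T : ℕ → ℝ} (hT : LambdaIneqs w' R T) :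
    LambdaIneqs w R (T ∘ p) := by
  intro j hj
  refine (hT (p j) ((H.validNode_iff j).2 hj)).trans_eq ?_
  rw [H.letterAt_eq j hj, sum_Ioc_eq_sum_Icc_ite, sum_Ioc_eq_sum_Icc_ite]
  refine congrArg _ (Finset.sum_equiv p (fun m => ?_) fun m hm => ?_).symm
  · simpa only [Finset.mem_Icc, ValidNode] using (H.validNode_iff m).symm
  · have hm : ValidNode w m := Finset.mem_Icc.1 hm
    rw [H.lamCoeff_eq hj hm, Function.comp_apply]
    by_cases hcol : letterAt w j ≤ letterAt w m + 1 ∧ letterAt w m ≤ letterAt w j + 1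
    · simp only [H.lt_iff_of_letter j m hj hm hcol.1 hcol.2]
    · have hzero : lamCoeff w j m = 0 := by
        rw [lamCoeff, if_neg (by omega), if_neg (by omega)]
      simp [hzero]

theorem lambdaIneqs_comp_iff (H : DiagramIso w w' p) (R T : ℕ → ℝ) :
    LambdaIneqs w R (T ∘ p) ↔ LambdaIneqs w' R T := by
  refine ⟨fun h => ?_, H.lambdaIneqs_comp⟩
  have hT := H.symm.lambdaIneqs_comp h
  rwa [Function.comp_assoc, p.self_comp_symm, Function.comp_id] at hT

end DiagramIso

/-! ### Invariance under two-moves -/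

section TwoMove

variable (u v : List ℕ) {a b : ℕ}

theorem nodes_append_pair (hab : a + 1 < b ∨ b + 1 < a) :
    letterAt (u ++ a :: b :: v) (u.length + 2) = b ∧
      wireX (u ++ a :: b :: v) (u.length + 2) = wordProd u b ∧
      wireY (u ++ a :: b :: v) (u.length + 2) = wordProd u (b + 1) := by
  have hb : sTrans a b = b := Equiv.swap_apply_of_ne_of_ne (by omega) (by omega)
  have hb' : sTrans a (b + 1) = b + 1 := Equiv.swap_apply_of_ne_of_ne (by omega) (by omega)
  have hword : u ++ a :: b :: v = (u ++ [a]) ++ b :: v := by simp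
  have hlength : u.length + 2 = (u ++ [a]).length + 1 := by simp
  rw [hword, hlength, letterAt_append_cons, wireX_append_cons, wireY_append_cons,
    wordProd_append, wordProd_singleton, Equiv.Perm.mul_apply, Equiv.Perm.mul_apply, hb, hb']
  exact ⟨rfl, rfl, rfl⟩

theorem nodes_swap (hab : a + 1 < b ∨ b + 1 < a) {j : ℕ} (hj : 1 ≤ j) :
    letterAt (u ++ b :: a :: v) (Equiv.swap (u.length + 1) (u.length + 2) j) =
        letterAt (u ++ a :: b :: v) j ∧
      wireX (u ++ b :: a :: v) (Equiv.swap (u.length + 1) (u.length + 2) j) =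
        wireX (u ++ a :: b :: v) j ∧
      wireY (u ++ b :: a :: v) (Equiv.swap (u.length + 1) (u.length + 2) j) =
        wireY (u ++ a :: b :: v) j := by
  by_cases hfirst : j = u.length + 1
  · rw [hfirst, Equiv.swap_apply_left]
    simp only [nodes_append_pair u v hab.symm, letterAt_append_cons, wireX_append_cons,
      wireY_append_cons, and_self]
  by_cases hsecond : j = u.length + 2
  · rw [hsecond, Equiv.swap_apply_right]
    simp only [nodes_append_pair u v hab, letterAt_append_cons, wireX_append_cons,
      wireY_append_cons, and_self]
  rw [Equiv.swap_apply_of_ne_of_ne hfirst hsecond]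
  by_cases hleft : j ≤ u.length
  · have hj : ValidNode u j := ⟨hj, hleft⟩
    simp only [letterAt_append_left _ hj, wireX_append_left _ hj, wireY_append_left _ hj, and_self]
  · obtain ⟨i, hi, rfl⟩ : ∃ i, 1 ≤ i ∧ j = u.length + 2 + i := ⟨j - (u.length + 2), by omega⟩
    have hprod : wordProd (u ++ [b, a]) = wordProd (u ++ [a, b]) := by
      simp only [wordProd_append, wordProd_cons, wordProd_nil, mul_one, sTrans_comm hab]
    have hword : ∀ x y, u ++ x :: y :: v = (u ++ [x, y]) ++ v := by simp
    have hlength : ∀ x y : ℕ, u.length + 2 = (u ++ [x, y]).length := by simp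
    have hL := letterAt_append_right (u ++ [a, b]) v hi
    have hX := wireX_append_right (u ++ [a, b]) v hi
    have hY := wireY_append_right (u ++ [a, b]) v hi
    rw [← hprod] at hX hY
    rw [← hlength, ← hword] at hL hX hY
    rw [hL, hX, hY, hword, hlength b a]
    exact ⟨letterAt_append_right _ v hi, wireX_append_right _ v hi, wireY_append_right _ v hi⟩

theorem swap_lt_swap_iff {L j j' : ℕ} (h : ¬ (j = L + 1 ∧ j' = L + 2))
    (h' : ¬ (j = L + 2 ∧ j' = L + 1)) :
    Equiv.swap (L + 1) (L + 2) j < Equiv.swap (L + 1) (L + 2) j' ↔ j < j' := by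
  simp only [Equiv.swap_apply_def]
  grind

theorem not_nodeOnWire_append_pair (hab : a + 1 < b ∨ b + 1 < a) {r : ℕ}
    (h : NodeOnWire (u ++ a :: b :: v) (u.length + 1) r) :
    ¬ NodeOnWire (u ++ a :: b :: v) (u.length + 2) r := by
  obtain ⟨-, hX, hY⟩ := nodes_append_pair u v hab
  rw [NodeOnWire, wireX_append_cons, wireY_append_cons] at h
  rw [NodeOnWire, hX, hY]
  rcases h with rfl | rfl <;> simp only [EmbeddingLike.apply_eq_iff_eq] <;> omega

theorem diagramIso_swap (hab : a + 1 < b ∨ b + 1 < a) :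
    DiagramIso (u ++ a :: b :: v) (u ++ b :: a :: v)
      (Equiv.swap (u.length + 1) (u.length + 2)) where
  validNode_iff j := by
    simp only [ValidNode, Equiv.swap_apply_def, List.length_append, List.length_cons]
    grind
  letterAt_eq j hj := (nodes_swap u v hab hj.1).1
  wireX_eq j hj := (nodes_swap u v hab hj.1).2.1
  wireY_eq j hj := (nodes_swap u v hab hj.1).2.2
  lt_iff_of_wire j j' r _ _ hr hr' := by
    refine swap_lt_swap_iff ?_ ?_
    · rintro ⟨rfl, rfl⟩
      exact not_nodeOnWire_append_pair u v hab hr hr'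
    · rintro ⟨rfl, rfl⟩
      exact not_nodeOnWire_append_pair u v hab hr' hr
  lt_iff_of_letter j j' _ _ h h' := by
    refine swap_lt_swap_iff ?_ ?_ <;>
    · rintro ⟨rfl, rfl⟩
      rw [letterAt_append_cons, (nodes_append_pair u v hab).1] at h h'
      omega

end TwoMove

theorem TwoMoveEquiv.exists_diagramIso {w w' : List ℕ} (h : TwoMoveEquiv w w') :
    ∃ p, DiagramIso w w' p := by
  induction h with
  | refl => exact ⟨1, .refl w⟩
  | tail _ hstep ih =>
    obtain ⟨p, hp⟩ := ih
    obtain ⟨u, v, a, b, hab, rfl, rfl⟩ := hstep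
    exact ⟨_, hp.trans (diagramIso_swap u v hab)⟩

/-! ### Paths in a concatenated word -/

section AppendPath

variable {u : List ℕ} {b c j k r : ℕ}

theorem validNode_append {v : List ℕ} : ValidNode (u ++ v) j ↔
    ValidNode u j ∨ ∃ i, 1 ≤ i ∧ i ≤ v.length ∧ j = u.length + i := by
  simp only [ValidNode, List.length_append]
  constructor
  · rintro ⟨h₁, h₂⟩
    rcases le_or_gt j u.length with h | h
    · exact Or.inl ⟨h₁, h⟩
    · exact Or.inr ⟨j - u.length, by omega, by omega, by omega⟩
  · rintro (⟨h₁, h₂⟩ | ⟨i, h₁, h₂, rfl⟩) <;> omega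

theorem validNode_length_add {v : List ℕ} {i : ℕ} (hi : 1 ≤ i) (hiv : i ≤ v.length) :
    ValidNode (u ++ v) (u.length + i) :=
  validNode_append.2 (Or.inr ⟨i, hi, hiv, rfl⟩)

variable (v : List ℕ)

theorem nodeOnWire_append_left (hj : ValidNode u j) :
    NodeOnWire (u ++ v) j r ↔ NodeOnWire u j r := by
  rw [NodeOnWire, wireX_append_left v hj, wireY_append_left v hj, NodeOnWire]

theorem otherWire_append_left (hj : ValidNode u j) :
    otherWire (u ++ v) j r = otherWire u j r := by
  rw [otherWire, wireX_append_left v hj, wireY_append_left v hj, otherWire]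

theorem forbidden_append_left (hj : ValidNode u j) :
    Forbidden (u ++ v) k j r ↔ Forbidden u k j r := by
  rw [Forbidden, otherWire_append_left v hj, Forbidden]

theorem mem_segList_append_left (hb : ValidNode u b) (hc : ValidNode u c) :
    j ∈ segList (u ++ v) r b c ↔ j ∈ segList u r b c := by
  have hbL := hb.2
  have hcL := hc.2
  rw [mem_segList, mem_segList]
  constructor
  · rintro ⟨hj, hr, hlt, hgt⟩
    have hj : ValidNode u j := ⟨hj.1, by rcases lt_max_iff.1 hgt with h | h <;> omega⟩
    exact ⟨hj, (nodeOnWire_append_left v hj).1 hr, hlt, hgt⟩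
  · rintro ⟨hj, hr, h⟩
    exact ⟨hj.append_right v, (nodeOnWire_append_left v hj).2 hr, h⟩

theorem mem_tailList_append_left (hb : ValidNode u b) :
    j ∈ tailList (u ++ v) r b ↔ j ∈ tailList u r b ∨ j ∈ tailList (u ++ v) r u.length := by
  have hbL := hb.2
  simp only [mem_tailList]
  constructor
  · rintro ⟨hj, hr, hlt⟩
    rcases le_or_gt j u.length with h | h
    · exact Or.inl ⟨⟨hj.1, h⟩, (nodeOnWire_append_left v ⟨hj.1, h⟩).1 hr, hlt⟩
    · exact Or.inr ⟨hj, hr, h⟩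
  · rintro (⟨hj, hr, hlt⟩ | ⟨hj, hr, hlt⟩)
    · exact ⟨hj.append_right v, (nodeOnWire_append_left v hj).2 hr, hlt⟩
    · exact ⟨hj, hr, by omega⟩

theorem segList_append_left_perm (hb : ValidNode u b) (hc : ValidNode u c) :
    (segList (u ++ v) r b c).Perm (segList u r b c) := by
  rw [List.perm_ext_iff_of_nodup (nodup_segList _ _ _ _) (nodup_segList _ _ _ _)]
  exact fun j => mem_segList_append_left v hb hc

theorem tailList_append_left_perm (hb : ValidNode u b) :
    (tailList (u ++ v) r b).Perm (tailList u r b ++ tailList (u ++ v) r u.length) := by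
  have hnodup : (tailList u r b ++ tailList (u ++ v) r u.length).Nodup := by
    refine (nodup_tailList _ _ _).append (nodup_tailList _ _ _) fun j h₁ h₂ => ?_
    exact (mem_tailList.1 h₂).2.2.not_ge (mem_tailList.1 h₁).1.2
  rw [List.perm_ext_iff_of_nodup (nodup_tailList _ _ _) hnodup]
  exact fun j => (mem_tailList_append_left v hb).trans List.mem_append.symm

theorem travelOK_append_left : ∀ {r b : ℕ} {ms : List ℕ}, ValidNode u b →
    (∀ m ∈ ms, ValidNode u m) → (TravelOK (u ++ v) k r b ms ↔ TravelOK u k r b ms)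
  | _, _, [], _, _ => by rw [travelOK_nil, travelOK_nil]
  | r, b, m :: ms, hb, hms => by
    obtain ⟨hm, hms⟩ := List.forall_mem_cons.1 hms
    have hseg : (∀ j ∈ segList (u ++ v) r b m, ¬ Forbidden (u ++ v) k j r) ↔
        ∀ j ∈ segList u r b m, ¬ Forbidden u k j r := by
      refine forall_congr' fun j => ?_
      rw [mem_segList_append_left v hb hm]
      exact forall_congr' fun hj => not_congr (forbidden_append_left v (mem_segList.1 hj).1)
    simp only [TravelOK, nodeOnWire_append_left v hm, otherWire_append_left v hm, hseg,
      travelOK_append_left hm hms, hm, hm.append_right v]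

theorem legalPath_append_left {ms : List ℕ} (hms : ∀ m ∈ ms, ValidNode u m) :
    LegalPath (u ++ v) k ms ↔ LegalPath u k ms := by
  cases ms with
  | nil => exact Iff.rfl
  | cons m ms =>
    obtain ⟨hm, hms⟩ := List.forall_mem_cons.1 hms
    simp only [LegalPath, nodeOnWire_append_left v hm, otherWire_append_left v hm,
      travelOK_append_left v hm hms, hm, hm.append_right v]

theorem pathValue_append_left (T : ℕ → ℝ) : ∀ {r : ℕ} {ms : List ℕ},
    (∀ m ∈ ms, ValidNode u m) → pathValue (u ++ v) r ms T = pathValue u r ms T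
  | _, [], _ => rfl
  | _, _ :: _, hms => by
    obtain ⟨hm, hms⟩ := List.forall_mem_cons.1 hms
    simp only [pathValue, otherWire_append_left v hm, pathValue_append_left T hms]

theorem TravelOK.validNode_of_mem_visitTail {w : List ℕ} : ∀ {r b : ℕ} {ms : List ℕ},
    TravelOK w k r b ms → ∀ j ∈ visitTail w r b ms, ValidNode w j
  | _, _, [], _, _, hj => (mem_tailList.1 hj).1
  | _, _, _ :: _, ⟨hm, _, _, _, h⟩, j, hj => by
    simp only [visitTail, List.mem_append, List.mem_cons] at hj
    rcases hj with hj | rfl | hj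
    · exact (mem_segList.1 hj).1
    · exact hm
    · exact h.validNode_of_mem_visitTail j hj

theorem LegalPath.validNode_of_mem_visitList {w : List ℕ} : ∀ {ms : List ℕ},
    LegalPath w k ms → ∀ j ∈ visitList w k ms, ValidNode w j
  | _ :: _, ⟨hm, _, h⟩, j, hj => by
    simp only [visitList, List.mem_append, List.mem_cons] at hj
    rcases hj with hj | rfl | hj
    · exact (mem_tailList.1 hj).1
    · exact hm
    · exact h.validNode_of_mem_visitTail j hj

theorem visitTail_append_left_perm : ∀ {r b : ℕ} {ms : List ℕ}, ValidNode u b →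
    TravelOK u k r b ms →
      (visitTail (u ++ v) r b ms).Perm
        (visitTail u r b ms ++ tailList (u ++ v) (k + 1) u.length)
  | _, _, [], hb, h => by
    obtain rfl := h.1
    exact tailList_append_left_perm v hb
  | _, _, m :: _, hb, ⟨hm, _, _, _, h⟩ => by
    simp only [visitTail, otherWire_append_left v hm, List.append_assoc, List.cons_append]
    exact (segList_append_left_perm v hb hm).append ((visitTail_append_left_perm hm h).cons _)

theorem LegalPath.visitList_append_left_perm : ∀ {ms : List ℕ}, LegalPath u k ms →
    (visitList (u ++ v) k ms).Perm (visitList u k ms ++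
      (tailList (u ++ v) k u.length ++ tailList (u ++ v) (k + 1) u.length))
  | m :: ms, ⟨hm, _, h⟩ => by
    simp only [visitList, otherWire_append_left v hm]
    refine ((tailList_append_left_perm v hm).append
      ((visitTail_append_left_perm v hm h).cons _)).trans ?_
    rw [← Multiset.coe_eq_coe]
    simp only [← Multiset.coe_add, ← Multiset.cons_coe, ← Multiset.singleton_add]
    abel

theorem LegalPath.nodup_visitList_append {ms : List ℕ} (h : LegalPath u k ms)
    (hnodup : (visitList u k ms).Nodup)
    (hcross : ∀ i, 1 ≤ i → i ≤ v.length → NodeOnWire (u ++ v) (u.length + i) k →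
      ¬ NodeOnWire (u ++ v) (u.length + i) (k + 1)) :
    (visitList (u ++ v) k ms).Nodup := by
  rw [(h.visitList_append_left_perm v).nodup_iff]
  refine hnodup.append ((nodup_tailList _ _ _).append (nodup_tailList _ _ _) ?_) ?_
  · intro j hj hj'
    obtain ⟨hvalid, hk, hlt⟩ := mem_tailList.1 hj
    rcases validNode_append.1 hvalid with hu | ⟨i, hi, hiv, rfl⟩
    · exact hlt.not_ge hu.2
    · exact hcross i hi hiv hk (mem_tailList.1 hj').2.1
  · intro j hj hj'
    have hle := (h.validNode_of_mem_visitList j hj).2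
    rcases List.mem_append.1 hj' with hj' | hj' <;> exact (mem_tailList.1 hj').2.2.not_ge hle

end AppendPath

/-! ### Appending a block traversed by a single wire -/

/-- A single wire `s`, the spine, runs through all nodes of the block `v` appended to `u`, crossing
the wire `ρ i`, the rung, at the `i`-th of them, and meets no node of `u`. Both kinds of blocks of a
normal word have this shape. -/
structure SpineBlock (u v : List ℕ) (s : ℕ) (ρ : ℕ → ℕ) : Prop where
  not_nodeOnWire_left : ∀ j, ValidNode u j → ¬ NodeOnWire u j s
  rung_ne : ∀ i, 1 ≤ i → i ≤ v.length → ρ i ≠ s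
  rung_ne_rung : ∀ i i', 1 ≤ i → i < i' → i' ≤ v.length → ρ i ≠ ρ i'
  wires : ∀ i, 1 ≤ i → i ≤ v.length →
    wireX (u ++ v) (u.length + i) = s ∧ wireY (u ++ v) (u.length + i) = ρ i ∨
      wireX (u ++ v) (u.length + i) = ρ i ∧ wireY (u ++ v) (u.length + i) = s

namespace SpineBlock

variable {u v ms : List ℕ} {s k r b i : ℕ} {ρ : ℕ → ℕ}

theorem nodeOnWire_iff (B : SpineBlock u v s ρ) (hi : 1 ≤ i) (hiv : i ≤ v.length) :
    NodeOnWire (u ++ v) (u.length + i) r ↔ r = s ∨ r = ρ i := by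
  unfold NodeOnWire
  rcases B.wires i hi hiv with ⟨hX, hY⟩ | ⟨hX, hY⟩ <;> rw [hX, hY] <;> grind

theorem otherWire_spine (B : SpineBlock u v s ρ) (hi : 1 ≤ i) (hiv : i ≤ v.length) :
    otherWire (u ++ v) (u.length + i) s = ρ i := by
  have hne := B.rung_ne i hi hiv
  unfold otherWire
  rcases B.wires i hi hiv with ⟨hX, hY⟩ | ⟨hX, hY⟩ <;> rw [hX, hY] <;> simp [hne]

theorem otherWire_rung (B : SpineBlock u v s ρ) (hi : 1 ≤ i) (hiv : i ≤ v.length) :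
    otherWire (u ++ v) (u.length + i) (ρ i) = s := by
  have hne := B.rung_ne i hi hiv
  unfold otherWire
  rcases B.wires i hi hiv with ⟨hX, hY⟩ | ⟨hX, hY⟩ <;> rw [hX, hY] <;> simp [hne.symm]

theorem nodup_visitList (B : SpineBlock u v s ρ) (h : LegalPath u k ms)
    (hnodup : (visitList u k ms).Nodup) : (visitList (u ++ v) k ms).Nodup := by
  obtain ⟨j, hj, hkj⟩ := h.exists_nodeOnWire_start
  obtain ⟨j', hj', hkj'⟩ := h.exists_nodeOnWire_end
  have hk : k ≠ s := fun hks => B.not_nodeOnWire_left j hj (hks ▸ hkj)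
  have hk' : k + 1 ≠ s := fun hks => B.not_nodeOnWire_left j' hj' (hks ▸ hkj')
  refine h.nodup_visitList_append v hnodup fun i hi hiv => ?_
  rw [B.nodeOnWire_iff hi hiv, B.nodeOnWire_iff hi hiv]
  omega

/-- A path can enter the block only along a downward rung, from which it continues on the spine. -/
theorem validNode_of_travelOK (B : SpineBlock u v s ρ)
    (hspine : ∀ i ms, 1 ≤ i → i ≤ v.length → k < ρ i →
      ¬ TravelOK (u ++ v) k s (u.length + i) ms) :
    ∀ {r b : ℕ} {ms : List ℕ}, ValidNode u b → NodeOnWire u b r →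
      TravelOK (u ++ v) k r b ms → ∀ m ∈ ms, ValidNode u m
  | _, _, [], _, _, _ => by simp
  | r, b, m :: ms, hb, hrb, ⟨hm, hrm, hdir, _, hrest⟩ => by
    rcases validNode_append.1 hm with hm | ⟨i, hi, hiv, rfl⟩
    · rw [otherWire_append_left v hm] at hrest
      exact List.forall_mem_cons.2
        ⟨hm, B.validNode_of_travelOK hspine hm nodeOnWire_otherWire hrest⟩
    · have hdown : k < r := by
        have := hb.2
        split_ifs at hdir <;> omega
      rcases (B.nodeOnWire_iff hi hiv).1 hrm with rfl | rfl
      · exact absurd hrb (B.not_nodeOnWire_left b hb)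
      · rw [B.otherWire_rung hi hiv] at hrest
        exact absurd hrest (hspine i ms hi hiv hdown)

theorem travelOK_rung (B : SpineBlock u v s ρ) (hi : 1 ≤ i) (hiv : i ≤ v.length) (hk : k < ρ i)
    (h : TravelOK (u ++ v) k (ρ i) (u.length + i) ms) : ms = [] ∧ ρ i = k + 1 := by
  match ms, h with
  | [], h => exact ⟨rfl, travelOK_nil.1 h⟩
  | m :: ms, ⟨hm, hrm, hdir, _, _⟩ =>
    rw [if_neg hk.not_ge] at hdir
    rcases validNode_append.1 hm with hm | ⟨i', hi', hiv', rfl⟩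
    · have := hm.2
      omega
    · rcases (B.nodeOnWire_iff hi' hiv').1 hrm with h | h
      · exact absurd h (B.rung_ne i hi hiv)
      · exact absurd h (B.rung_ne_rung i i' hi (by omega) hiv')

theorem tailList_rung (B : SpineBlock u v s ρ) (hi : 1 ≤ i) (hiv : i ≤ v.length) :
    tailList (u ++ v) (ρ i) (u.length + i) = [] := by
  refine List.eq_nil_iff_forall_not_mem.2 fun j hj => ?_
  obtain ⟨hvalid, hr, hlt⟩ := mem_tailList.1 hj
  rcases validNode_append.1 hvalid with hj | ⟨i', hi', hiv', rfl⟩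
  · have := hj.2
    omega
  · rcases (B.nodeOnWire_iff hi' hiv').1 hr with h | h
    · exact B.rung_ne i hi hiv h
    · exact B.rung_ne_rung i i' hi (by omega) hiv' h

theorem legalPath_or_exists (B : SpineBlock u v s ρ)
    (hspine : ∀ i ms, 1 ≤ i → i ≤ v.length → k < ρ i →
      ¬ TravelOK (u ++ v) k s (u.length + i) ms)
    (h : LegalPath (u ++ v) k ms) :
    LegalPath u k ms ∨ ∃ i ms', 1 ≤ i ∧ i ≤ v.length ∧ ms = (u.length + i) :: ms' ∧
      (k = s ∧ TravelOK (u ++ v) k (ρ i) (u.length + i) ms' ∨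
        k = ρ i ∧ TravelOK (u ++ v) k s (u.length + i) ms') := by
  match ms, h with
  | m :: ms, ⟨hm, hkm, hrest⟩ =>
    rcases validNode_append.1 hm with hm' | ⟨i, hi, hiv, rfl⟩
    · refine Or.inl ((legalPath_append_left v ?_).1 ⟨hm, hkm, hrest⟩)
      rw [otherWire_append_left v hm'] at hrest
      exact List.forall_mem_cons.2
        ⟨hm', B.validNode_of_travelOK hspine hm' nodeOnWire_otherWire hrest⟩
    · refine Or.inr ⟨i, ms, hi, hiv, rfl, ?_⟩
      rcases (B.nodeOnWire_iff hi hiv).1 hkm with rfl | rfl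
      · exact Or.inl ⟨rfl, B.otherWire_spine hi hiv ▸ hrest⟩
      · exact Or.inr ⟨rfl, B.otherWire_rung hi hiv ▸ hrest⟩

end SpineBlock

/-- The differences of consecutive terms of the chain `t 1, …, t m, 0`. -/
def chainGap (m : ℕ) (t : ℕ → ℝ) (i : ℕ) : ℝ :=
  t i - if i = m then 0 else t (i + 1)

/-! ### Descending and ascending blocks -/

theorem tailList_length (w : List ℕ) (r : ℕ) : tailList w r w.length = [] :=
  List.eq_nil_iff_forall_not_mem.2 fun _ hj =>
    (mem_tailList.1 hj).2.2.not_ge (mem_tailList.1 hj).1.2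

theorem segList_eq_nil {w : List ℕ} {r b c : ℕ} (h : b + 1 = c ∨ c + 1 = b) :
    segList w r b c = [] := by
  refine List.eq_nil_iff_forall_not_mem.2 fun j hj => ?_
  have := (mem_segList.1 hj).2.2
  omega

theorem legalPath_singleton {w : List ℕ} {k m : ℕ} (hm : ValidNode w m) (hkm : NodeOnWire w m k)
    (htail : tailList w k m = []) (hend : otherWire w m k = k + 1)
    (htail' : tailList w (k + 1) m = []) :
    LegalPath w k [m] ∧ (visitList w k [m]).Nodup := by
  refine ⟨⟨hm, hkm, travelOK_nil.2 hend⟩, ?_⟩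
  rw [visitList, visitTail, hend, htail, htail']
  exact List.nodup_singleton m

theorem legalPath_pair {w : List ℕ} {k m m' r : ℕ} (hm : ValidNode w m) (hkm : NodeOnWire w m k)
    (htail : tailList w k m = []) (hr : otherWire w m k = r) (hm' : ValidNode w m')
    (hrm' : NodeOnWire w m' r) (hdir : if r ≤ k then m' < m else m < m')
    (hadj : m + 1 = m' ∨ m' + 1 = m) (hend : otherWire w m' r = k + 1)
    (htail' : tailList w (k + 1) m' = []) :
    LegalPath w k [m, m'] ∧ (visitList w k [m, m']).Nodup := by
  subst hr
  refine ⟨⟨hm, hkm, hm', hrm', hdir, by simp [segList_eq_nil hadj], travelOK_nil.2 hend⟩, ?_⟩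
  rw [visitList, visitTail, visitTail, hend, htail, htail', segList_eq_nil hadj]
  simpa using (show m ≠ m' by omega)

theorem SpineBlock.stringIneqs_append_iff {u v : List ℕ} {s : ℕ} {ρ : ℕ → ℕ} {T : ℕ → ℝ}
    (B : SpineBlock u v s ρ)
    (hpath : ∀ k ms, LegalPath (u ++ v) k ms → LegalPath u k ms ∨ ∃ i, 1 ≤ i ∧ i ≤ v.length ∧
      ∀ T, pathValue (u ++ v) k ms T = chainGap v.length (fun i => T (u.length + i)) i)
    (hgap : ∀ i, 1 ≤ i → i ≤ v.length →
      ∃ k ms, LegalPath (u ++ v) k ms ∧ (visitList (u ++ v) k ms).Nodup ∧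
        ∀ T, pathValue (u ++ v) k ms T = chainGap v.length (fun i => T (u.length + i)) i) :
    StringIneqs (u ++ v) T ↔ StringIneqs u T ∧
      ∀ i, 1 ≤ i → i ≤ v.length → 0 ≤ chainGap v.length (fun i => T (u.length + i)) i := by
  refine ⟨fun h => ⟨fun k ms hms hnodup => ?_, fun i hi hiv => ?_⟩,
    fun ⟨hu, hv⟩ k ms hms hnodup => ?_⟩
  · rw [← pathValue_append_left v T hms.validNode]
    exact h k ms ((legalPath_append_left v hms.validNode).2 hms) (B.nodup_visitList hms hnodup)
  · obtain ⟨k, ms, hms, hnodup, hval⟩ := hgap i hi hiv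
    exact hval T ▸ h k ms hms hnodup
  · rcases hpath k ms hms with hms | ⟨i, hi, hiv, hval⟩
    · rw [(hms.visitList_append_left_perm v).nodup_iff] at hnodup
      rw [pathValue_append_left v T hms.validNode]
      exact hu k ms hms hnodup.of_append_left
    · exact hval T ▸ hv i hi hiv

section Desc

variable {u v ms : List ℕ} {a k i : ℕ}

/-- Passing straight through the next node on the spine is forbidden, so the path leaves there. -/
theorem SpineBlock.desc_travelOK_spine (B : SpineBlock u v (a + v.length + 1) (fun i => a + i))
    (hi : 1 ≤ i) (hiv : i ≤ v.length) (hk : k ≤ a + i)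
    (h : TravelOK (u ++ v) k (a + v.length + 1) (u.length + i) ms) :
    ms = [] ∧ k = a + v.length ∨ ms = [u.length + (i + 1)] ∧ k = a + i ∧ i + 1 ≤ v.length := by
  match ms, h with
  | [], h =>
    have := travelOK_nil.1 h
    exact Or.inl ⟨rfl, by omega⟩
  | m :: ms, ⟨hm, hrm, hdir, hseg, hrest⟩ =>
    rw [if_neg (by omega)] at hdir
    rcases validNode_append.1 hm with hm | ⟨i', hi', hiv', rfl⟩
    · exact absurd hrm (by simpa [nodeOnWire_append_left v hm] using B.not_nodeOnWire_left m hm)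
    have hnext : i' = i + 1 := by
      by_contra hne
      refine hseg (u.length + (i + 1)) (mem_segList.2 ⟨validNode_length_add (by omega) (by omega),
        (B.nodeOnWire_iff (by omega) (by omega)).2 (Or.inl rfl), by omega, by omega⟩) ?_
      rw [Forbidden, B.otherWire_spine (by omega) (by omega)]
      omega
    subst hnext
    rw [B.otherWire_spine hi' hiv'] at hrest
    obtain ⟨rfl, hend⟩ := B.travelOK_rung hi' hiv' (by omega) hrest
    exact Or.inr ⟨rfl, by omega, hiv'⟩

theorem SpineBlock.desc_legalPath (B : SpineBlock u v (a + v.length + 1) (fun i => a + i))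
    (hk : k ≤ a + v.length) (h : LegalPath (u ++ v) k ms) :
    LegalPath u k ms ∨ ∃ i, 1 ≤ i ∧ i ≤ v.length ∧
      ∀ T, pathValue (u ++ v) k ms T = chainGap v.length (fun i => T (u.length + i)) i := by
  have hspine : ∀ i ms, 1 ≤ i → i ≤ v.length → k < a + i →
      ¬ TravelOK (u ++ v) k (a + v.length + 1) (u.length + i) ms := fun i ms hi hiv hlt hms => by
    have := B.desc_travelOK_spine hi hiv hlt.le hms
    omega
  refine (B.legalPath_or_exists hspine h).imp_right ?_
  rintro ⟨i, ms', hi, hiv, rfl, ⟨rfl, _⟩ | ⟨rfl, hrest⟩⟩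
  · omega
  · refine ⟨i, hi, hiv, fun T => ?_⟩
    have hup : a + i < a + v.length + 1 := by omega
    rcases B.desc_travelOK_spine hi hiv le_rfl hrest with ⟨rfl, hlast⟩ | ⟨rfl, _, hiv'⟩
    · have hlast : i = v.length := by omega
      simp only [pathValue, B.otherWire_rung hi hiv, if_pos hup, chainGap, if_pos hlast]
      ring
    · have hdown : ¬ a + v.length + 1 < a + (i + 1) := by omega
      have hne : i ≠ v.length := by omega
      simp only [pathValue, B.otherWire_rung hi hiv, if_pos hup,
        B.otherWire_spine (Nat.le_add_left 1 i) hiv', if_neg hdown, chainGap, if_neg hne]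
      ring

theorem SpineBlock.desc_exists_legalPath
    (B : SpineBlock u v (a + v.length + 1) (fun i => a + i)) (hi : 1 ≤ i) (hiv : i ≤ v.length) :
    ∃ k ms, LegalPath (u ++ v) k ms ∧ (visitList (u ++ v) k ms).Nodup ∧
      ∀ T, pathValue (u ++ v) k ms T = chainGap v.length (fun i => T (u.length + i)) i := by
  have hup : a + i < a + v.length + 1 := by omega
  have hrung : NodeOnWire (u ++ v) (u.length + i) (a + i) :=
    (B.nodeOnWire_iff hi hiv).2 (Or.inr rfl)
  by_cases hlast : i = v.length
  · have hlen : u.length + i = (u ++ v).length := by rw [List.length_append, hlast]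
    obtain ⟨hlegal, hnodup⟩ := legalPath_singleton (validNode_length_add hi hiv) hrung
      (B.tailList_rung hi hiv) (by rw [B.otherWire_rung hi hiv, hlast])
      (by rw [hlen, tailList_length])
    refine ⟨a + i, [u.length + i], hlegal, hnodup, fun T => ?_⟩
    simp only [pathValue, B.otherWire_rung hi hiv, if_pos hup, chainGap, if_pos hlast]
    ring
  · have hi' : 1 ≤ i + 1 := by omega
    have hiv' : i + 1 ≤ v.length := by omega
    obtain ⟨hlegal, hnodup⟩ := legalPath_pair (validNode_length_add hi hiv) hrung
      (B.tailList_rung hi hiv) (B.otherWire_rung hi hiv) (validNode_length_add hi' hiv')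
      ((B.nodeOnWire_iff hi' hiv').2 (Or.inl rfl)) (by rw [if_neg (by omega)]; omega)
      (Or.inl rfl) (B.otherWire_spine hi' hiv') (B.tailList_rung hi' hiv')
    refine ⟨a + i, [u.length + i, u.length + (i + 1)], hlegal, hnodup, fun T => ?_⟩
    have hdown : ¬ a + v.length + 1 < a + (i + 1) := by omega
    simp only [pathValue, B.otherWire_rung hi hiv, if_pos hup, B.otherWire_spine hi' hiv',
      if_neg hdown, chainGap, if_neg hlast]
    ring

end Desc

section Asc

variable {u v ms : List ℕ} {a k i : ℕ}

theorem SpineBlock.asc_travelOK_spine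
    (B : SpineBlock u v (a + 1) (fun i => a + v.length + 2 - i)) (hak : a + 1 ≤ k)
    (hi : 1 ≤ i) (hk : k ≤ a + v.length + 2 - i)
    (h : TravelOK (u ++ v) k (a + 1) (u.length + i) ms) :
    ms = [u.length + (i - 1)] ∧ k = a + v.length + 2 - i ∧ 2 ≤ i := by
  match ms, h with
  | [], h =>
    have := travelOK_nil.1 h
    omega
  | m :: ms, ⟨hm, hrm, hdir, hseg, hrest⟩ =>
    rw [if_pos hak] at hdir
    rcases validNode_append.1 hm with hm | ⟨i', hi', hiv', rfl⟩
    · exact absurd hrm (by simpa [nodeOnWire_append_left v hm] using B.not_nodeOnWire_left m hm)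
    rw [B.otherWire_spine hi' hiv'] at hrest
    obtain ⟨rfl, hend⟩ := B.travelOK_rung hi' hiv' (by omega) hrest
    have hprev : i' = i - 1 := by omega
    exact ⟨by rw [hprev], by omega, by omega⟩

theorem SpineBlock.asc_legalPath (B : SpineBlock u v (a + 1) (fun i => a + v.length + 2 - i))
    (hak : a + 1 ≤ k) (h : LegalPath (u ++ v) k ms) :
    LegalPath u k ms ∨ ∃ i, 1 ≤ i ∧ i ≤ v.length ∧
      ∀ T, pathValue (u ++ v) k ms T = chainGap v.length (fun i => T (u.length + i)) i := by
  have hspine : ∀ i ms, 1 ≤ i → i ≤ v.length → k < a + v.length + 2 - i →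
      ¬ TravelOK (u ++ v) k (a + 1) (u.length + i) ms := fun i ms hi _ hlt hms => by
    have := B.asc_travelOK_spine hak hi hlt.le hms
    omega
  refine (B.legalPath_or_exists hspine h).imp_right ?_
  rintro ⟨i, ms', hi, hiv, rfl, ⟨rfl, hrest⟩ | ⟨rfl, hrest⟩⟩
  · have hup : a + 1 < a + v.length + 2 - i := by omega
    obtain ⟨rfl, hend⟩ := B.travelOK_rung hi hiv hup hrest
    have hlast : i = v.length := by omega
    refine ⟨i, hi, hiv, fun T => ?_⟩
    simp only [pathValue, B.otherWire_spine hi hiv, if_pos hup, chainGap, if_pos hlast]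
    ring
  · obtain ⟨rfl, _, hi₂⟩ := B.asc_travelOK_spine hak hi le_rfl hrest
    obtain ⟨i, rfl⟩ := Nat.exists_eq_add_of_le' hi
    have hi' : 1 ≤ i := by omega
    have hiv' : i ≤ v.length := by omega
    have hdown : ¬ a + v.length + 2 - (i + 1) < a + 1 := by omega
    have hup : a + 1 < a + v.length + 2 - i := by omega
    have hne : i ≠ v.length := by omega
    refine ⟨i, hi', hiv', fun T => ?_⟩
    simp only [pathValue, B.otherWire_rung hi hiv, if_neg hdown, Nat.add_sub_cancel,
      B.otherWire_spine hi' hiv', if_pos hup, chainGap, if_neg hne]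
    ring

theorem SpineBlock.asc_exists_legalPath
    (B : SpineBlock u v (a + 1) (fun i => a + v.length + 2 - i)) (hi : 1 ≤ i)
    (hiv : i ≤ v.length) :
    ∃ k ms, LegalPath (u ++ v) k ms ∧ (visitList (u ++ v) k ms).Nodup ∧
      ∀ T, pathValue (u ++ v) k ms T = chainGap v.length (fun i => T (u.length + i)) i := by
  have hup : a + 1 < a + v.length + 2 - i := by omega
  have hspine : NodeOnWire (u ++ v) (u.length + i) (a + 1) :=
    (B.nodeOnWire_iff hi hiv).2 (Or.inl rfl)
  by_cases hlast : i = v.length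
  · have hlen : u.length + i = (u ++ v).length := by rw [List.length_append, hlast]
    have hrung : a + v.length + 2 - i = a + 1 + 1 := by omega
    obtain ⟨hlegal, hnodup⟩ := legalPath_singleton (validNode_length_add hi hiv) hspine
      (by rw [hlen, tailList_length]) ((B.otherWire_spine hi hiv).trans hrung)
      (hrung ▸ B.tailList_rung hi hiv)
    refine ⟨a + 1, [u.length + i], hlegal, hnodup, fun T => ?_⟩
    simp only [pathValue, B.otherWire_spine hi hiv, if_pos hup, chainGap, if_pos hlast]
    ring
  · have hi' : 1 ≤ i + 1 := by omega
    have hiv' : i + 1 ≤ v.length := by omega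
    have hrung : a + v.length + 2 - i = a + v.length + 2 - (i + 1) + 1 := by omega
    obtain ⟨hlegal, hnodup⟩ := legalPath_pair (validNode_length_add hi' hiv')
      ((B.nodeOnWire_iff hi' hiv').2 (Or.inr rfl)) (B.tailList_rung hi' hiv')
      (B.otherWire_rung hi' hiv') (validNode_length_add hi hiv) hspine
      (by rw [if_pos (by omega)]; omega) (Or.inr rfl)
      ((B.otherWire_spine hi hiv).trans hrung) (hrung ▸ B.tailList_rung hi hiv)
    refine ⟨_, _, hlegal, hnodup, fun T => ?_⟩
    have hdown : ¬ a + v.length + 2 - (i + 1) < a + 1 := by omega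
    simp only [pathValue, B.otherWire_rung hi' hiv', if_neg hdown, B.otherWire_spine hi hiv,
      if_pos hup, chainGap, if_neg hlast]
    ring

end Asc

/-! ### The string cone of a normal word -/

theorem length_normalWord (a : ℕ) (σ : List Bool) : (normalWord a σ).length = Dim σ.length := by
  induction σ generalizing a with
  | nil => rfl
  | cons s σ ih =>
    cases s <;>
      simp only [normalWord, List.length_append, ih, length_ascBlock, length_descBlock,
        List.length_cons, dim_succ]

theorem isReversing_normalWord (a : ℕ) (σ : List Bool) :
    IsReversing a σ.length (normalWord a σ) where
  length_eq := length_normalWord a σ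
  wordProd_apply x h₁ h₂ := by rw [wordProd_normalWord, if_pos ⟨h₁, h₂⟩]

theorem take_ascBlock {m i : ℕ} (a : ℕ) (h : i ≤ m) : (ascBlock a m).take i = ascBlock a i := by
  rw [ascBlock, List.take_range'_of_length_ge h, ascBlock]

theorem take_descBlock {m i : ℕ} (a : ℕ) (h : i ≤ m) :
    (descBlock a m).take i = descBlock (a + m - i) i := by
  refine List.ext_getElem (by simp [h]) fun k hk _ => ?_
  simp only [descBlock, ascBlock, List.length_take, List.length_reverse, List.length_range',
    lt_inf_iff, List.getElem_take, List.getElem_reverse, List.getElem_range', one_mul] at hk ⊢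
  omega

theorem letterAt_ascBlock {a m i : ℕ} (hi : 1 ≤ i) (him : i ≤ m) :
    letterAt (ascBlock a m) i = a + i := by
  rw [letterAt, List.getD_eq_getElem _ _ (by rw [length_ascBlock]; omega)]
  simp only [ascBlock, List.getElem_range', one_mul]
  omega

theorem letterAt_descBlock {a m i : ℕ} (hi : 1 ≤ i) (him : i ≤ m) :
    letterAt (descBlock a m) i = a + m + 1 - i := by
  rw [letterAt, List.getD_eq_getElem _ _ (by rw [length_descBlock]; omega)]
  simp only [descBlock, ascBlock, List.getElem_reverse, List.length_range', List.getElem_range',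
    one_mul]
  omega

theorem wireX_descBlock {a m i : ℕ} (hi : 1 ≤ i) (him : i ≤ m) :
    wireX (descBlock a m) i = a + m + 1 - i := by
  rw [wireX, stateAbove, letterAt_descBlock hi him, take_descBlock a (by omega),
    wordProd_descBlock]
  split_ifs <;> omega

theorem wireY_descBlock {a m i : ℕ} (hi : 1 ≤ i) (him : i ≤ m) :
    wireY (descBlock a m) i = a + m + 1 := by
  rw [wireY, stateAbove, letterAt_descBlock hi him, take_descBlock a (by omega),
    wordProd_descBlock]
  split_ifs <;> omega

theorem wireX_ascBlock {a m i : ℕ} (hi : 1 ≤ i) (him : i ≤ m) :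
    wireX (ascBlock a m) i = a + 1 := by
  rw [wireX, stateAbove, letterAt_ascBlock hi him, take_ascBlock a (by omega),
    wordProd_ascBlock]
  split_ifs <;> omega

theorem wireY_ascBlock {a m i : ℕ} (hi : 1 ≤ i) (him : i ≤ m) :
    wireY (ascBlock a m) i = a + i + 1 := by
  rw [wireY, stateAbove, letterAt_ascBlock hi him, take_ascBlock a (by omega),
    wordProd_ascBlock]
  split_ifs <;> omega

theorem not_nodeOnWire_normalWord {a r : ℕ} {σ : List Bool}
    (hr : ¬ (a + 1 ≤ r ∧ r ≤ a + σ.length + 1)) {j : ℕ} (hj : ValidNode (normalWord a σ) j) :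
    ¬ NodeOnWire (normalWord a σ) j r := by
  have hwires := (isReversing_normalWord a σ).wires_mem_Icc hj
  rintro (rfl | rfl)
  exacts [hr hwires.1, hr hwires.2]

theorem spineBlock_desc (a : ℕ) (σ : List Bool) :
    SpineBlock (normalWord a σ) (descBlock a (σ.length + 1))
      (a + (descBlock a (σ.length + 1)).length + 1) (fun i => a + i) := by
  rw [length_descBlock]
  refine ⟨fun j => not_nodeOnWire_normalWord (by omega), fun i _ hi => ?_,
    fun i i' _ _ _ => by omega, fun i hi hiv => Or.inr ?_⟩ <;> rw [length_descBlock] at *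
  · omega
  · rw [wireX_append_right _ _ hi, wireY_append_right _ _ hi, wireX_descBlock hi hiv,
      wireY_descBlock hi hiv, wordProd_normalWord, wordProd_normalWord]
    split_ifs <;> omega

theorem spineBlock_asc (a : ℕ) (σ : List Bool) :
    SpineBlock (normalWord (a + 1) σ) (ascBlock a (σ.length + 1)) (a + 1)
      (fun i => a + (ascBlock a (σ.length + 1)).length + 2 - i) := by
  rw [length_ascBlock]
  refine ⟨fun j => not_nodeOnWire_normalWord (by omega), fun i _ hi => ?_,
    fun i i' _ _ hi' => ?_, fun i hi hiv => Or.inl ?_⟩ <;> rw [length_ascBlock] at *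
  · omega
  · omega
  · rw [wireX_append_right _ _ hi, wireY_append_right _ _ hi, wireX_ascBlock hi hiv,
      wireY_ascBlock hi hiv, wordProd_normalWord, wordProd_normalWord]
    split_ifs <;> omega

theorem LegalPath.mem_Icc_of_normalWord {a k : ℕ} {σ : List Bool} {ms : List ℕ}
    (h : LegalPath (normalWord a σ) k ms) : a + 1 ≤ k ∧ k ≤ a + σ.length := by
  obtain ⟨j, hj, hkj⟩ := h.exists_nodeOnWire_start
  obtain ⟨j', hj', hkj'⟩ := h.exists_nodeOnWire_end
  have hk := not_imp_not.1 (not_nodeOnWire_normalWord · hj) hkj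
  have hk' := not_imp_not.1 (not_nodeOnWire_normalWord · hj') hkj'
  omega

theorem stringIneqs_normalWord_desc (a : ℕ) (σ : List Bool) (T : ℕ → ℝ) :
    StringIneqs (normalWord a (true :: σ)) T ↔ StringIneqs (normalWord a σ) T ∧
      ∀ i, 1 ≤ i → i ≤ σ.length + 1 →
        0 ≤ chainGap (σ.length + 1) (fun i => T (Dim σ.length + i)) i := by
  have B := spineBlock_desc a σ
  have := B.stringIneqs_append_iff (T := T)
    (fun k ms h => B.desc_legalPath
      ((LegalPath.mem_Icc_of_normalWord (σ := true :: σ) h).2.trans (by simp)) h)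
    (fun i => B.desc_exists_legalPath)
  rwa [length_normalWord, length_descBlock] at this

theorem stringIneqs_normalWord_asc (a : ℕ) (σ : List Bool) (T : ℕ → ℝ) :
    StringIneqs (normalWord a (false :: σ)) T ↔ StringIneqs (normalWord (a + 1) σ) T ∧
      ∀ i, 1 ≤ i → i ≤ σ.length + 1 →
        0 ≤ chainGap (σ.length + 1) (fun i => T (Dim σ.length + i)) i := by
  have B := spineBlock_asc a σ
  have := B.stringIneqs_append_iff (T := T)
    (fun k ms h => B.asc_legalPath (LegalPath.mem_Icc_of_normalWord (σ := false :: σ) h).1 h)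
    (fun i => B.asc_exists_legalPath)
  rwa [length_normalWord, length_ascBlock] at this

/-! ### The `λ`-inequalities of a normal word -/

/-- The negated Cartan integers of type `A`: the coefficient with which a node in column `d` enters
the `λ`-inequality of a node above it in column `c`. -/
def columnCoeff (c d : ℕ) : ℝ :=
  if d = c then -2 else if d = c + 1 ∨ d + 1 = c then 1 else 0

theorem columnCoeff_add_left (a c d : ℕ) : columnCoeff (a + c) (a + d) = columnCoeff c d := by
  simp only [columnCoeff, Nat.add_left_cancel_iff, add_assoc]

theorem columnCoeff_sub_left {b c d : ℕ} (hc : c ≤ b) (hd : d ≤ b) :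
    columnCoeff (b - c) (b - d) = columnCoeff c d := by
  unfold columnCoeff
  congr 1
  · simp only [eq_iff_iff]
    omega
  · congr 1
    simp only [eq_iff_iff]
    omega

theorem columnCoeff_of_add_one_lt {c d : ℕ} (h : c + 1 < d) : columnCoeff c d = 0 := by
  rw [columnCoeff, if_neg (by omega), if_neg (by omega)]

theorem sum_columnCoeff_Ioc {m i : ℕ} (him : i ≤ m) (t : ℕ → ℝ) :
    ∑ k ∈ Finset.Ioc i m, columnCoeff i k * t k = if i = m then 0 else t (i + 1) := by
  split_ifs with h
  · rw [h, Finset.Ioc_self, Finset.sum_empty]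
  · rw [Finset.sum_eq_single_of_mem (i + 1) (Finset.mem_Ioc.2 ⟨by omega, by omega⟩)]
    · rw [columnCoeff, if_neg (by omega), if_pos (Or.inl rfl), one_mul]
    · intro k hk hne
      rw [columnCoeff_of_add_one_lt (by have := (Finset.mem_Ioc.1 hk).1; omega), zero_mul]

theorem sum_columnCoeff_eq_chainGap_sub {m q : ℕ} (hq : 1 ≤ q) (hqm : q + 1 ≤ m) (t : ℕ → ℝ) :
    ∑ i ∈ Finset.Ioc 0 m, columnCoeff (q + 1) i * t i = chainGap m t q - chainGap m t (q + 1) := by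
  obtain ⟨q, rfl⟩ := Nat.exists_eq_add_of_le' hq
  have hlow : ∑ i ∈ Finset.Ioc 0 q, columnCoeff (q + 1 + 1) i * t i = 0 :=
    Finset.sum_eq_zero fun i hi => by
      have := (Finset.mem_Ioc.1 hi).2
      rw [columnCoeff, if_neg (by omega), if_neg (by omega), zero_mul]
  have hhigh := sum_columnCoeff_Ioc hqm t
  rw [← Finset.sum_Ioc_consecutive _ (Nat.zero_le q) (show q ≤ m by omega), hlow, zero_add,
    ← Finset.sum_Ioc_consecutive _ (show q ≤ q + 1 + 1 by omega) hqm, hhigh,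
    Finset.sum_Ioc_succ_top (by omega), Finset.sum_Ioc_succ_top le_rfl, Finset.Ioc_self,
    Finset.sum_empty, chainGap, chainGap, if_neg (by omega : q + 1 ≠ m), columnCoeff, columnCoeff,
    if_neg (by omega), if_pos (by omega), if_pos rfl]
  ring

theorem sum_Ioc_add_left (L i m : ℕ) (f : ℕ → ℝ) :
    ∑ k ∈ Finset.Ioc (L + i) (L + m), f k = ∑ k ∈ Finset.Ioc i m, f (L + k) := by
  rw [← Finset.map_add_left_Ioc, Finset.sum_map]
  rfl

theorem forall_validNode_append {u v : List ℕ} {P : ℕ → Prop} :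
    (∀ j, ValidNode (u ++ v) j → P j) ↔
      (∀ j, ValidNode u j → P j) ∧ ∀ i, ValidNode v i → P (u.length + i) := by
  refine ⟨fun h => ⟨fun j hj => h j (hj.append_right v),
    fun i hi => h _ (validNode_length_add hi.1 hi.2)⟩, fun ⟨hu, hv⟩ j hj => ?_⟩
  rcases validNode_append.1 hj with hj | ⟨i, hi, hiv, rfl⟩
  exacts [hu j hj, hv i ⟨hi, hiv⟩]

theorem lambdaIneqs_append (u v : List ℕ) (R T : ℕ → ℝ) :
    LambdaIneqs (u ++ v) R T ↔
      LambdaIneqs u (fun c => R c +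
        ∑ i ∈ Finset.Ioc 0 v.length, columnCoeff c (letterAt v i) * T (u.length + i)) T ∧
      LambdaIneqs v R (fun i => T (u.length + i)) := by
  rw [LambdaIneqs, forall_validNode_append]
  refine and_congr (forall₂_congr fun j hj => ?_) (forall₂_congr fun i hi => ?_)
  · have hu : ∑ k ∈ Finset.Ioc j u.length, lamCoeff (u ++ v) j k * T k =
        ∑ k ∈ Finset.Ioc j u.length, lamCoeff u j k * T k :=
      Finset.sum_congr rfl fun k hk => by
        have hk : ValidNode u k :=
          ⟨by have := (Finset.mem_Ioc.1 hk).1; omega, (Finset.mem_Ioc.1 hk).2⟩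
        rw [lamCoeff, letterAt_append_left v hj, letterAt_append_left v hk, lamCoeff]
    have hv : ∑ i ∈ Finset.Ioc 0 v.length, lamCoeff (u ++ v) j (u.length + i) * T (u.length + i) =
        ∑ i ∈ Finset.Ioc 0 v.length,
          columnCoeff (letterAt u j) (letterAt v i) * T (u.length + i) :=
      Finset.sum_congr rfl fun i hi => by
        rw [lamCoeff, letterAt_append_left v hj,
          letterAt_append_right u v (Finset.mem_Ioc.1 hi).1, columnCoeff]
    have hshift := sum_Ioc_add_left u.length 0 v.length fun k => lamCoeff (u ++ v) j k * T k
    rw [add_zero] at hshift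
    rw [List.length_append, ← Finset.sum_Ioc_consecutive _ hj.2 (Nat.le_add_right _ _), hshift, hu,
      hv, letterAt_append_left v hj, add_assoc, add_comm (∑ k ∈ _, _) (∑ i ∈ _, _)]
  · rw [List.length_append, sum_Ioc_add_left, letterAt_append_right u v hi.1]
    refine iff_of_eq (congrArg _ (congrArg _ (Finset.sum_congr rfl fun k hk => ?_)))
    rw [lamCoeff, letterAt_append_right u v hi.1,
      letterAt_append_right u v (by have := (Finset.mem_Ioc.1 hk).1; omega), lamCoeff]

theorem lambdaIneqs_iff_chainGap_le {v : List ℕ}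
    (hv : ∀ i k, ValidNode v i → ValidNode v k →
      columnCoeff (letterAt v i) (letterAt v k) = columnCoeff i k) (R t : ℕ → ℝ) :
    LambdaIneqs v R t ↔ ∀ i, ValidNode v i → chainGap v.length t i ≤ R (letterAt v i) := by
  refine forall₂_congr fun i hi => ?_
  have hsum : ∑ k ∈ Finset.Ioc i v.length, lamCoeff v i k * t k =
      ∑ k ∈ Finset.Ioc i v.length, columnCoeff i k * t k :=
    Finset.sum_congr rfl fun k hk => by
      rw [← hv i k hi ⟨by have := (Finset.mem_Ioc.1 hk).1; omega, (Finset.mem_Ioc.1 hk).2⟩]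
      rfl
  rw [hsum, sum_columnCoeff_Ioc hi.2, chainGap, sub_le_iff_le_add]

theorem sum_columnCoeff_letterAt {v : List ℕ}
    (hv : ∀ i k, ValidNode v i → ValidNode v k →
      columnCoeff (letterAt v i) (letterAt v k) = columnCoeff i k) {q : ℕ} (hq : 1 ≤ q)
    (hqv : q + 1 ≤ v.length) (t : ℕ → ℝ) :
    ∑ i ∈ Finset.Ioc 0 v.length, columnCoeff (letterAt v (q + 1)) (letterAt v i) * t i =
      chainGap v.length t q - chainGap v.length t (q + 1) := by
  rw [← sum_columnCoeff_eq_chainGap_sub hq hqv]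
  exact Finset.sum_congr rfl fun i hi => by
    rw [hv _ _ ⟨Nat.le_add_left 1 q, hqv⟩ (Finset.mem_Ioc.1 hi)]

theorem columnCoeff_letterAt_ascBlock {a m i k : ℕ} (hi : ValidNode (ascBlock a m) i)
    (hk : ValidNode (ascBlock a m) k) :
    columnCoeff (letterAt (ascBlock a m) i) (letterAt (ascBlock a m) k) = columnCoeff i k := by
  simp only [ValidNode, length_ascBlock] at hi hk
  rw [letterAt_ascBlock hi.1 hi.2, letterAt_ascBlock hk.1 hk.2, columnCoeff_add_left]

theorem columnCoeff_letterAt_descBlock {a m i k : ℕ} (hi : ValidNode (descBlock a m) i)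
    (hk : ValidNode (descBlock a m) k) :
    columnCoeff (letterAt (descBlock a m) i) (letterAt (descBlock a m) k) = columnCoeff i k := by
  simp only [ValidNode, length_descBlock] at hi hk
  rw [letterAt_descBlock hi.1 hi.2, letterAt_descBlock hk.1 hk.2,
    columnCoeff_sub_left (by omega) (by omega)]

/-! ### Interlacing patterns -/

/-- The row of length `m` obtained from the row `x` of length `m + 1` and the values `t` at the
nodes of a block of length `m`, which is descending for `true` and ascending for `false`. With rows
as coordinates, the inequalities at the block say that this row interlaces with `x`. -/
def nextRow : Bool → ℕ → (ℕ → ℝ) → (ℕ → ℝ) → ℕ → ℝ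
  | true, m, x, t, c => x c - chainGap m t (m + 1 - c)
  | false, m, x, t, c => x (c + 1) + chainGap m t c

/-- The Gelfand–Tsetlin condition: the rows built from the top row `x` and the blocks of the normal
word of `σ`, labelled by `T` and read from the last block to the first, interlace. -/
def IsPattern : List Bool → (ℕ → ℝ) → (ℕ → ℝ) → Prop
  | [], _, _ => True
  | s :: σ, x, T =>
    (∀ c, 1 ≤ c → c ≤ σ.length + 1 →
      nextRow s (σ.length + 1) x (fun i => T (Dim σ.length + i)) c ∈ Set.Icc (x (c + 1)) (x c)) ∧
    IsPattern σ (nextRow s (σ.length + 1) x fun i => T (Dim σ.length + i)) T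

section Block

variable {a m : ℕ} {R x : ℕ → ℝ}

theorem descBlock_ineqs_iff (hR : ∀ c, 1 ≤ c → c ≤ m → R (a + c) = x c - x (c + 1)) (t : ℕ → ℝ) :
    (∀ i, 1 ≤ i → i ≤ m → 0 ≤ chainGap m t i) ∧ LambdaIneqs (descBlock a m) R t ↔
      ∀ c, 1 ≤ c → c ≤ m → nextRow true m x t c ∈ Set.Icc (x (c + 1)) (x c) := by
  rw [lambdaIneqs_iff_chainGap_le fun i k => columnCoeff_letterAt_descBlock]
  simp only [ValidNode, length_descBlock, nextRow, Set.mem_Icc, sub_le_self_iff]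
  have hrefl : ∀ i, 1 ≤ i → i ≤ m →
      letterAt (descBlock a m) i = a + (m + 1 - i) ∧ m + 1 - (m + 1 - i) = i := fun i hi him =>
    ⟨by rw [letterAt_descBlock hi him]; omega, by omega⟩
  constructor
  · rintro ⟨hnonneg, hle⟩ c hc hcm
    have hle := hle (m + 1 - c) ⟨by omega, by omega⟩
    rw [(hrefl _ (by omega) (by omega)).1, (hrefl c hc hcm).2, hR c hc hcm] at hle
    exact ⟨le_sub_comm.1 hle, hnonneg _ (by omega) (by omega)⟩
  · refine fun h => ⟨fun i hi him => ?_, fun i ⟨hi, him⟩ => ?_⟩ <;>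
      have := h (m + 1 - i) (by omega) (by omega) <;> rw [(hrefl i hi him).2] at this
    · exact this.2
    · rw [(hrefl i hi him).1, hR _ (by omega) (by omega)]
      exact le_sub_comm.1 this.1

theorem ascBlock_ineqs_iff (hR : ∀ c, 1 ≤ c → c ≤ m → R (a + c) = x c - x (c + 1)) (t : ℕ → ℝ) :
    (∀ i, 1 ≤ i → i ≤ m → 0 ≤ chainGap m t i) ∧ LambdaIneqs (ascBlock a m) R t ↔
      ∀ c, 1 ≤ c → c ≤ m → nextRow false m x t c ∈ Set.Icc (x (c + 1)) (x c) := by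
  rw [lambdaIneqs_iff_chainGap_le fun i k => columnCoeff_letterAt_ascBlock]
  simp only [ValidNode, length_ascBlock, nextRow, Set.mem_Icc, le_add_iff_nonneg_right,
    ← le_sub_iff_add_le', and_imp, ← forall_and]
  refine forall₃_congr fun c hc hcm => ?_
  rw [letterAt_ascBlock hc hcm, hR c hc hcm]

theorem add_sum_descBlock (hR : ∀ c, 1 ≤ c → c ≤ m → R (a + c) = x c - x (c + 1)) (t : ℕ → ℝ)
    {c : ℕ} (hc : 1 ≤ c) (hcm : c + 1 ≤ m) :
    R (a + c) + ∑ i ∈ Finset.Ioc 0 m, columnCoeff (a + c) (letterAt (descBlock a m) i) * t i =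
      nextRow true m x t c - nextRow true m x t (c + 1) := by
  have hsum := sum_columnCoeff_letterAt (v := descBlock a m) (q := m - c)
    (fun i k => columnCoeff_letterAt_descBlock) (by omega) (by rw [length_descBlock]; omega) t
  rw [length_descBlock, letterAt_descBlock (by omega) (by omega),
    show a + m + 1 - (m - c + 1) = a + c by omega] at hsum
  rw [hsum, hR c hc (by omega), nextRow, nextRow, show m - c + 1 = m + 1 - c by omega,
    show m + 1 - (c + 1) = m - c by omega]
  ring

theorem add_sum_ascBlock (hR : ∀ c, 1 ≤ c → c ≤ m → R (a + c) = x c - x (c + 1)) (t : ℕ → ℝ)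
    {c : ℕ} (hc : 1 ≤ c) (hcm : c + 1 ≤ m) :
    R (a + 1 + c) +
        ∑ i ∈ Finset.Ioc 0 m, columnCoeff (a + 1 + c) (letterAt (ascBlock a m) i) * t i =
      nextRow false m x t c - nextRow false m x t (c + 1) := by
  have hsum := sum_columnCoeff_letterAt (v := ascBlock a m)
    (fun i k => columnCoeff_letterAt_ascBlock) hc (by rwa [length_ascBlock]) t
  rw [length_ascBlock, letterAt_ascBlock (by omega) hcm] at hsum
  rw [add_right_comm, add_assoc a, hsum, hR (c + 1) (by omega) hcm, nextRow, nextRow]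
  ring

end Block

theorem stringIneqs_and_lambdaIneqs_normalWord_iff {a : ℕ} {σ : List Bool} {R x T : ℕ → ℝ}
    (hR : ∀ c, 1 ≤ c → c ≤ σ.length → R (a + c) = x c - x (c + 1)) :
    StringIneqs (normalWord a σ) T ∧ LambdaIneqs (normalWord a σ) R T ↔ IsPattern σ x T := by
  induction σ generalizing a R x with
  | nil =>
    refine iff_of_true ⟨fun k ms hms => ?_, fun j hj => ?_⟩ trivial
    · have := hms.mem_Icc_of_normalWord
      simp only [List.length_nil] at this
      omega
    · have := hj.1.trans hj.2
      simp only [normalWord, List.length_nil] at this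
      omega
  | cons s σ ih =>
    cases s with
    | true =>
      rw [stringIneqs_normalWord_desc, normalWord, lambdaIneqs_append, length_normalWord,
        length_descBlock, IsPattern, ← descBlock_ineqs_iff (m := σ.length + 1) hR,
        and_and_and_comm, ih, and_comm]
      intro c hc hcσ
      exact add_sum_descBlock hR _ hc (Nat.succ_le_succ hcσ)
    | false =>
      rw [stringIneqs_normalWord_asc, normalWord, lambdaIneqs_append, length_normalWord,
        length_ascBlock, IsPattern, ← ascBlock_ineqs_iff (m := σ.length + 1) hR,
        and_and_and_comm, ih, and_comm]
      intro c hc hcσ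
      exact add_sum_ascBlock hR _ hc (Nat.succ_le_succ hcσ)

theorem nextRow_congr {m : ℕ} {x x' t t' : ℕ → ℝ} (s : Bool)
    (hx : ∀ c, 1 ≤ c → c ≤ m + 1 → x c = x' c) (ht : ∀ i, 1 ≤ i → i ≤ m → t i = t' i) {c : ℕ}
    (hc : 1 ≤ c) (hcm : c ≤ m) : nextRow s m x t c = nextRow s m x' t' c := by
  have hgap : ∀ i, 1 ≤ i → i ≤ m → chainGap m t i = chainGap m t' i := fun i hi him => by
    rw [chainGap, chainGap, ht i hi him]
    split_ifs with h
    · rfl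
    · rw [ht (i + 1) (by omega) (by omega)]
  cases s with
  | true => rw [nextRow, nextRow, hx c hc (by omega), hgap _ (by omega) (by omega)]
  | false => rw [nextRow, nextRow, hx (c + 1) (by omega) (by omega), hgap c hc hcm]

theorem nextRow_zero (s : Bool) (m c : ℕ) : nextRow s m (fun _ => 0) (fun _ => 0) c = 0 := by
  cases s <;> simp [nextRow, chainGap]

theorem nextRow_add_mul (s : Bool) (m : ℕ) (x x' t t' : ℕ → ℝ) (ε : ℝ) :
    nextRow s m (fun c => x c + ε * x' c) (fun i => t i + ε * t' i) =
      fun c => nextRow s m x t c + ε * nextRow s m x' t' c := by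
  funext c
  cases s <;> simp only [nextRow, chainGap] <;> split_ifs <;> ring

theorem sum_chainGap {m i : ℕ} (him : i ≤ m) (t : ℕ → ℝ) :
    ∑ k ∈ Finset.Icc i m, chainGap m t k = t i := by
  induction him using Nat.decreasingInduction with
  | self => rw [Finset.Icc_self, Finset.sum_singleton, chainGap, if_pos rfl, sub_zero]
  | of_succ k hk ih =>
    rw [Finset.Icc_add_one_left_eq_Ioc] at ih
    rw [← Finset.add_sum_Ioc_eq_sum_Icc hk.le, ih, chainGap, if_neg hk.ne, sub_add_cancel]

theorem chainGap_sum_Icc {m i : ℕ} (him : i ≤ m) (g : ℕ → ℝ) :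
    chainGap m (fun i => ∑ k ∈ Finset.Icc i m, g k) i = g i := by
  rw [chainGap, ← Finset.add_sum_Ioc_eq_sum_Icc him, Finset.Icc_add_one_left_eq_Ioc]
  split_ifs with h
  · rw [h, Finset.Ioc_self, Finset.sum_empty, add_zero, sub_zero]
  · rw [add_sub_cancel_right]

theorem exists_nextRow_eq (s : Bool) (m : ℕ) (x y : ℕ → ℝ) :
    ∃ t, ∀ c, 1 ≤ c → c ≤ m → nextRow s m x t c = y c := by
  cases s with
  | true =>
    refine ⟨fun i => ∑ k ∈ Finset.Icc i m, (x (m + 1 - k) - y (m + 1 - k)), fun c hc hcm => ?_⟩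
    rw [nextRow, chainGap_sum_Icc (by omega), show m + 1 - (m + 1 - c) = c by omega,
      sub_sub_cancel]
  | false =>
    refine ⟨fun i => ∑ k ∈ Finset.Icc i m, (y k - x (k + 1)), fun c _ hcm => ?_⟩
    rw [nextRow, chainGap_sum_Icc hcm, add_sub_cancel]

theorem IsPattern.congr {σ : List Bool} {x x' T T' : ℕ → ℝ} (h : IsPattern σ x T)
    (hx : ∀ c, 1 ≤ c → c ≤ σ.length + 1 → x c = x' c)
    (hT : ∀ j, 1 ≤ j → j ≤ Dim σ.length → T j = T' j) : IsPattern σ x' T' := by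
  induction σ generalizing x x' with
  | nil => trivial
  | cons s σ ih =>
    have hdim : Dim (σ.length + 1) = Dim σ.length + (σ.length + 1) := dim_succ _
    rw [List.length_cons] at hx hT
    have hrow : ∀ c, 1 ≤ c → c ≤ σ.length + 1 →
        nextRow s (σ.length + 1) x (fun i => T (Dim σ.length + i)) c =
          nextRow s (σ.length + 1) x' (fun i => T' (Dim σ.length + i)) c := fun _ =>
      nextRow_congr s hx fun i hi him => hT _ (by omega) (by omega)
    refine ⟨fun c hc hcσ => ?_, ih h.2 hrow fun j hj _ => hT j hj (by omega)⟩
    rw [← hrow c hc hcσ, ← hx c hc (by omega), ← hx (c + 1) (by omega) (by omega)]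
    exact h.1 c hc hcσ

/-! ### Integrality of extreme points -/

/-- The integers as a subgroup of the reals. -/
def integers : AddSubgroup ℝ := (Int.castAddHom ℝ).range

/-- The distance to the nearest integer. It gives a direction in which interlacing rows can be
moved both ways: it is `1`-Lipschitz, and it fixes exactly the integral entries. -/
def intDist (x : ℝ) : ℝ := Metric.infDist x integers

theorem intDist_eq_zero_iff {x : ℝ} : intDist x = 0 ↔ x ∈ integers :=
  (Int.isClosedEmbedding_coe_real.isClosed_range.mem_iff_infDist_zero
    (Set.range_nonempty _)).symm

theorem monotone_add_mul_intDist {ε : ℝ} (hε : |ε| ≤ 1) :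
    Monotone fun x => x + ε * intDist x := by
  intro x y hxy
  have hlip : |intDist x - intDist y| ≤ y - x := by
    have := (Metric.lipschitz_infDist_pt (integers : Set ℝ)).dist_le_mul x y
    rwa [NNReal.coe_one, one_mul, Real.dist_eq, Real.dist_eq, abs_sub_comm x y,
      abs_of_nonneg (sub_nonneg.2 hxy)] at this
  have hmul : ε * (intDist x - intDist y) ≤ y - x :=
    calc ε * (intDist x - intDist y) ≤ |ε| * |intDist x - intDist y| :=
          (le_abs_self _).trans_eq (abs_mul _ _)
      _ ≤ 1 * (y - x) := mul_le_mul hε hlip (abs_nonneg _) zero_le_one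
      _ = y - x := one_mul _
  dsimp only
  linarith

theorem mem_integers_of_nextRow {m : ℕ} {x t : ℕ → ℝ} (s : Bool)
    (hx : ∀ c, 1 ≤ c → c ≤ m + 1 → x c ∈ integers)
    (hrow : ∀ c, 1 ≤ c → c ≤ m → nextRow s m x t c ∈ integers) {i : ℕ} (hi : 1 ≤ i)
    (him : i ≤ m) : t i ∈ integers := by
  rw [← sum_chainGap him t]
  refine sum_mem fun k hk => ?_
  have hk : i ≤ k ∧ k ≤ m := Finset.mem_Icc.1 hk
  cases s with
  | true =>
    have := sub_mem (hx (m + 1 - k) (by omega) (by omega)) (hrow (m + 1 - k) (by omega) (by omega))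
    rwa [nextRow, sub_sub_cancel, show m + 1 - (m + 1 - k) = k by omega] at this
  | false =>
    have := sub_mem (hrow k (by omega) hk.2) (hx (k + 1) (by omega) (by omega))
    rwa [nextRow, add_sub_cancel_left] at this

theorem exists_extend_nextRow_eq (s : Bool) (L m : ℕ) (E₀ x y : ℕ → ℝ) :
    ∃ E : ℕ → ℝ, (∀ j ≤ L, E j = E₀ j) ∧
      ∀ c, 1 ≤ c → c ≤ m → nextRow s m x (fun i => E (L + i)) c = y c := by
  obtain ⟨e, he⟩ := exists_nextRow_eq s m x y
  refine ⟨fun j => if j ≤ L then E₀ j else e (j - L), fun j hj => if_pos hj, fun c hc hcm => ?_⟩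
  rw [← he c hc hcm]
  refine nextRow_congr s (fun _ _ _ => rfl) (fun i hi _ => ?_) hc hcm
  dsimp only
  rw [if_neg (show ¬ L + i ≤ L by omega), Nat.add_sub_cancel_left]

theorem IsPattern.exists_perturbation {σ : List Bool} {x T : ℕ → ℝ} (h : IsPattern σ x T) :
    ∃ E : ℕ → ℝ,
      (∀ ε : ℝ, |ε| ≤ 1 → IsPattern σ (fun c => x c + ε * intDist (x c)) (T + ε • E)) ∧
      ((∀ c, 1 ≤ c → c ≤ σ.length + 1 → x c ∈ integers) →
        (∀ j, 1 ≤ j → j ≤ Dim σ.length → E j = 0) →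
          ∀ j, 1 ≤ j → j ≤ Dim σ.length → T j ∈ integers) := by
  induction σ generalizing x with
  | nil => exact ⟨0, fun _ _ => trivial, fun _ _ j hj hj' => absurd (hj.trans hj') (by decide)⟩
  | cons s σ ih =>
    obtain ⟨hrow, hrest⟩ := h
    rw [List.length_cons]
    set L := Dim σ.length
    set m := σ.length + 1
    have hdim : Dim m = L + m := dim_succ _
    set y := nextRow s m x fun i => T (L + i)
    obtain ⟨E₀, hE₀, hint₀⟩ := ih hrest
    obtain ⟨E, hEE₀, hE⟩ :=
      exists_extend_nextRow_eq s L m E₀ (fun c => intDist (x c)) fun c => intDist (y c)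
    refine ⟨E, fun ε hε => ?_, fun hx hzero => ?_⟩
    · have hnext : ∀ c, 1 ≤ c → c ≤ m → nextRow s m (fun c => x c + ε * intDist (x c))
          (fun i => (T + ε • E) (L + i)) c = y c + ε * intDist (y c) := fun c hc hcm => by
        rw [← hE c hc hcm]
        exact congrFun (nextRow_add_mul s m x _ _ _ ε) c
      refine ⟨fun c hc hcm => ?_, (hE₀ ε hε).congr (fun c hc hcm => (hnext c hc hcm).symm)
        fun j _ hj => congrArg (T j + ε * ·) (hEE₀ j hj).symm⟩
      have hmono := monotone_add_mul_intDist hε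
      exact (hnext c hc hcm).symm ▸ ⟨hmono (hrow c hc hcm).1, hmono (hrow c hc hcm).2⟩
    · have hyint : ∀ c, 1 ≤ c → c ≤ m → y c ∈ integers := fun c hc hcm => by
        rw [← intDist_eq_zero_iff, ← hE c hc hcm, ← nextRow_zero s m c]
        exact nextRow_congr s (fun c hc hcm => intDist_eq_zero_iff.2 (hx c hc hcm))
          (fun i hi him => hzero _ (by omega) (by omega)) hc hcm
      intro j hj hjm
      rcases le_or_gt j L with hjL | hjL
      · exact hint₀ hyint (fun j hj hjL => hEE₀ j hjL ▸ hzero j hj (by omega)) j hj hjL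
      · obtain ⟨i, rfl⟩ := Nat.exists_eq_add_of_lt hjL
        exact mem_integers_of_nextRow s hx hyint (t := fun i => T (L + i)) (Nat.le_add_left 1 i)
          (by omega)

theorem IsPattern.mem_integers_of_extreme {σ : List Bool} {x T : ℕ → ℝ} (h : IsPattern σ x T)
    (hx : ∀ c, x c ∈ integers)
    (hext : ∀ E, IsPattern σ x (T + E) → IsPattern σ x (T - E) →
      ∀ j, 1 ≤ j → j ≤ Dim σ.length → E j = 0)
    {j : ℕ} (hj : 1 ≤ j) (hjσ : j ≤ Dim σ.length) : T j ∈ integers := by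
  obtain ⟨E, hE, hint⟩ := h.exists_perturbation
  have hfix : ∀ ε : ℝ, (fun c => x c + ε * intDist (x c)) = x := fun ε => funext fun c => by
    rw [intDist_eq_zero_iff.2 (hx c), mul_zero, add_zero]
  have hadd := hE 1 (by norm_num)
  have hsub := hE (-1) (by norm_num)
  rw [hfix, one_smul] at hadd
  rw [hfix, neg_one_smul, ← sub_eq_add_neg] at hsub
  exact hint (fun c _ _ => hx c) (hext E hadd hsub) j hj hjσ

/-- The partition of the weight `λ`, whose consecutive differences are the coordinates of `λ`; it
is the top row of the patterns of `λ`. -/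
def topRow (n : ℕ) (lam : ℕ → ℤ) (c : ℕ) : ℝ := ∑ d ∈ Finset.Icc c n, (lam d : ℝ)

theorem topRow_mem_integers (n : ℕ) (lam : ℕ → ℤ) (c : ℕ) : topRow n lam c ∈ integers :=
  sum_mem fun d _ => ⟨lam d, rfl⟩

theorem topRow_sub_topRow_succ {n c : ℕ} (hcn : c ≤ n) (lam : ℕ → ℤ) :
    topRow n lam c - topRow n lam (c + 1) = lam c := by
  rw [topRow, topRow, ← Finset.add_sum_Ioc_eq_sum_Icc hcn, Finset.Icc_add_one_left_eq_Ioc,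
    add_sub_cancel_right]

theorem mem_stringPolytope_iff_isPattern {w : List ℕ} {τ : List Bool} {p : Equiv.Perm ℕ}
    (hw : IsReduced τ.length w) (hp : DiagramIso w (normalWord 0 τ) p) (lam : ℕ → ℤ) (T : ℕ → ℝ) :
    (fun j : Fin (Dim τ.length) => (T ∘ p) (j + 1)) ∈ stringPolytope τ.length w lam ↔
      IsPattern τ (topRow τ.length lam) T := by
  rw [stringPolytope, Set.mem_inter_iff, mem_stringCone_iff hw (T ∘ p),
    mem_lamCone_iff hw.1 lam (T ∘ p), hp.stringIneqs_comp_iff, hp.lambdaIneqs_comp_iff]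
  exact stringIneqs_and_lambdaIneqs_normalWord_iff fun c _ hc => by
    rw [zero_add, topRow_sub_topRow_succ hc]

theorem eq_zero_of_mem_extremePoints {E : Type*} [AddCommGroup E] [Module ℝ E] {A : Set E}
    {x v : E} (hx : x ∈ A.extremePoints ℝ) (hadd : x + v ∈ A) (hsub : x - v ∈ A) : v = 0 := by
  have hmid : x ∈ openSegment ℝ (x + v) (x - v) :=
    ⟨1 / 2, 1 / 2, by norm_num, by norm_num, by norm_num, by module⟩
  exact add_eq_left.1 (hx.2 hadd hsub hmid)

theorem mem_integers_of_mem_extremePoints {w : List ℕ} {τ : List Bool} {p : Equiv.Perm ℕ}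
    (hw : IsReduced τ.length w) (hp : DiagramIso w (normalWord 0 τ) p) {lam : ℕ → ℤ} {T : ℕ → ℝ}
    (hT : (fun j : Fin (Dim τ.length) => (T ∘ p) (j + 1)) ∈
      (stringPolytope τ.length w lam).extremePoints ℝ) {j : ℕ} (hj : ValidNode w j) :
    T (p j) ∈ integers := by
  have hpattern := mem_stringPolytope_iff_isPattern hw hp lam
  have hvalid : ∀ i, ValidNode w i ↔ 1 ≤ p i ∧ p i ≤ Dim τ.length := fun i => by
    rw [← hp.validNode_iff, ValidNode, length_normalWord]
  obtain ⟨hj, hjτ⟩ := (hvalid j).1 hj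
  refine ((hpattern T).1 hT.1).mem_integers_of_extreme (topRow_mem_integers _ lam)
    (fun E hadd hsub k hk hkτ => ?_) hj hjτ
  have hzero := eq_zero_of_mem_extremePoints (v := fun i : Fin (Dim τ.length) => (E ∘ p) (i + 1))
    hT ((hpattern (T + E)).2 hadd) ((hpattern (T - E)).2 hsub)
  obtain ⟨i, rfl⟩ := p.surjective k
  obtain ⟨hi, hiw⟩ := (hvalid i).2 ⟨hk, hkτ⟩
  obtain ⟨i, rfl⟩ := Nat.exists_eq_add_of_le' hi
  exact congrFun hzero ⟨i, hiw.trans_eq hw.1⟩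

/-- integrality.
If there is a sequence `(σ_1,…,σ_n) ∈ {A,D}^n` with
`ind_{σ_k}(C_{σ_{k+1}} ∘ ⋯ ∘ C_{σ_n}(i)) = 0` for all `k`, then for every dominant
integral weight `λ` the string polytope `Δ_i(λ)` is a lattice polytope: all of its
vertices (extreme points) lie in `ℤ^N`. -/
theorem statement17 (n : ℕ) (hn : 1 ≤ n) (i : List ℕ) (hi : IsReduced n i)
    (hsimp : SimplicialWord n i) (lam : ℕ → ℤ) (hlam : Dominant n lam) :
    ∀ x ∈ (stringPolytope n i lam).extremePoints ℝ, ∀ j, ∃ z : ℤ, x j = (z : ℝ) := by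
  intro x hx j
  obtain ⟨τ, rfl, hequiv⟩ := hsimp.exists_equiv_normalWord hi.isReversing
  obtain ⟨p, hp⟩ := hequiv.exists_diagramIso
  obtain ⟨T, rfl⟩ : ∃ T : ℕ → ℝ, x = fun j : Fin (Dim τ.length) => (T ∘ p) (j + 1) :=
    ⟨fun m => entry _ x (p.symm m - 1), funext fun j => by simp [entry]⟩
  obtain ⟨z, hz⟩ :=
    mem_integers_of_mem_extremePoints hi hp hx ⟨Nat.le_add_left 1 j, j.2.trans_eq hi.1.symm⟩
  exact ⟨z, hz.symm⟩

end StringPolytope
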